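/- arXiv:2411.06745 — 3 statements merged into one kernel-verified Lean document; each statement's English description precedes it below -/
import Mathlib

section
/- Fix an integer r ≥ 1, and for i ∈ {1, …, r} let α_i be the automorphism of T_∞ determined by Par(α_i, w) = 1 if and only if w = a^{i−1}(ba^{r−1})^n for some n ≥ 0. Then B_{r,∞} is the closure of the subgroup generated by α_1, …, α_r in the topology of pointwise convergence; that is, an automorphism σ ∈ Aut(T_∞) lies in B_{r,∞} if and only if for every integer m ≥ 1 there exists an element τ of the subgroup generated by α_1, …, α_r with σ(w) = τ(w) for every word w of length at most m. -/
/-- Nodes of the infinite binary rooted tree `T_∞` are finite words over `{a,b}`,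
encoded as `List Bool` with `a = false` and `b = true`; children of `w` are
`w ++ [false]` and `w ++ [true]`. An automorphism of `T_∞`. -/
def IsTreeAut (σ : List Bool → List Bool) : Prop :=
  Function.Bijective σ ∧ (∀ w, (σ w).length = w.length) ∧
    ∀ w s, ∃ t, σ (w ++ [s]) = σ w ++ [t]

/-- The parity `Par(σ,x) ∈ {0,1}`: `0` if `σ(xa) = σ(x)a`, and `1` otherwise. -/
def par (σ : List Bool → List Bool) (x : List Bool) : ℕ :=
  if σ (x ++ [false]) = σ x ++ [false] then 0 else 1

/-- `W(r,i)`: the words `s₁ ⋯ s_{ri−1}` of length `r*i − 1` over `{a,b}` with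
`s_j = a` whenever `r ∣ j`. -/
noncomputable def Wset (r i : ℕ) : Finset (List Bool) :=
  ((Finset.univ : Finset (Fin (r*i-1) → Bool)).filter
    (fun s => ∀ j : Fin (r*i-1), r ∣ (j:ℕ)+1 → s j = false)).image List.ofFn

/-- `Q_r(σ,x) := Σ_{i≥1} 2^i Σ_{w ∈ W(r,i)} Par(σ, xw)` in `ℤ₂`. -/
noncomputable def Qr (r : ℕ) (σ : List Bool → List Bool) (x : List Bool) : ℤ_[2] :=
  ∑' i : ℕ, (2:ℤ_[2])^(i+1) * ∑ w ∈ Wset r (i+1), (par σ (x ++ w) : ℤ_[2])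

/-- `P_r(σ,x) := (−1)^{Par(σ,x)} + Q_r(σ,xb) − Q_r(σ,xa)` in `ℤ₂`. -/
noncomputable def Pr (r : ℕ) (σ : List Bool → List Bool) (x : List Bool) : ℤ_[2] :=
  (-1:ℤ_[2])^(par σ x) + Qr r σ (x ++ [true]) - Qr r σ (x ++ [false])

/-- `M_{r,∞}`: tree automorphisms for which `P_r(σ,·)` is constant. -/
def Mset (r : ℕ) : Set (List Bool → List Bool) :=
  {σ | IsTreeAut σ ∧ ∀ x₁ x₂ : List Bool, Pr r σ x₁ = Pr r σ x₂}

/-- `B_{r,∞}`: elements of `M_{r,∞}` with common value `P_r(σ) = 1`. -/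
def Bset (r : ℕ) : Set (List Bool → List Bool) :=
  {σ | σ ∈ Mset r ∧ Pr r σ [] = 1}

/-!
An automorphism `σ` of `T_∞` is recorded by its portrait `p`, the labelling of the nodes by
parities. Half of `Q_r(σ,∅)` is a `2`-adic weight of `p`, and half of `Q_r(σ,x)` is the weight of
the section `p|_x`, so `σ ∈ B_{r,∞}` means `weight (p|_xb) = weight (p|_xa) + p x` for every `x`.

The weight of a portrait is the sum, over the words `w` of length `r - 1`, of the label at `w` and
twice the weight of the section at `wa`. If `p` satisfies the condition above, then
`weight (pq) - weight p - weight q` is therefore twice a sum of defects of the same kind, hence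
divisible by every power of `2`, hence zero. So the weight is additive, `B_{r,∞}` is a group; it
contains the `α_i`, and it is closed.

Conversely, up to multiplication by `α_1`, an element of `B_{r,∞}` fixes the first level, so it is
a pair `(g, h)` of elements of `B_{r,∞}` of equal weight. Approximating `g` and `h` by elements of
the subgroup, whose weights are integers `c` and `d`, makes `c` and `d` congruent modulo a large
power of `2`. The subgroup contains `(g, α_r^c)`, `(α_r^d, h)` and `(α_r, α_r)`, hence
`(g, α_r^{c-d} h)`, and `α_r^{c-d}` is trivial to a large depth.
-/

section Words

theorem mem_Wset {r i : ℕ} {w : List Bool} :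
    w ∈ Wset r i ↔ w.length = r * i - 1 ∧ ∀ j, r ∣ j + 1 → w[j]? ≠ some true := by
  simp only [Wset, Finset.mem_image, Finset.mem_filter, Finset.mem_univ, true_and]
  constructor
  · rintro ⟨s, hs, rfl⟩
    refine ⟨List.length_ofFn, fun j hj h => ?_⟩
    obtain ⟨hlt, hsj⟩ := List.getElem?_eq_some_iff.1 h
    rw [List.getElem_ofFn, hs _ hj] at hsj
    exact Bool.false_ne_true hsj
  · rintro ⟨hlen, hw⟩
    have hlt (j : Fin (r * i - 1)) : (j : ℕ) < w.length := hlen.symm ▸ j.2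
    refine ⟨fun j => w[(j : ℕ)]'(hlt j), fun j hj => ?_, ?_⟩
    · simpa [List.getElem?_eq_getElem (hlt j)] using hw j hj
    · exact List.ext_getElem (by simp [hlen]) fun j _ _ => by simp

theorem mem_Wset_one {k : ℕ} {w : List Bool} : w ∈ Wset (k + 1) 1 ↔ w.length = k := by
  refine mem_Wset.trans ⟨fun h => by simpa using h.1, fun h => ⟨by simpa using h, ?_⟩⟩
  intro j hj
  have hle : w.length ≤ j := by
    have := Nat.le_of_dvd j.succ_pos hj
    omega
  rw [List.getElem?_eq_none hle]
  exact Option.some_ne_none _ |>.symm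

theorem append_mem_Wset {k i : ℕ} {u v : List Bool} (hu : u.length = k) :
    u ++ false :: v ∈ Wset (k + 1) (i + 2) ↔ v ∈ Wset (k + 1) (i + 1) := by
  have hlen : (k + 1) * (i + 2) - 1 = k + 1 + ((k + 1) * (i + 1) - 1) := by
    have : 0 < (k + 1) * (i + 1) := by positivity
    rw [show (k + 1) * (i + 2) = (k + 1) * (i + 1) + (k + 1) by ring]
    omega
  rw [mem_Wset, mem_Wset, hlen, List.length_append, List.length_cons, hu]
  refine and_congr (by omega) ⟨fun h j hj => ?_, fun h j hj => ?_⟩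
  · have := h (j + (k + 1)) (by rw [add_right_comm]; exact hj.add (dvd_refl _))
    rwa [List.getElem?_append_right (by omega), hu, show j + (k + 1) - k = j + 1 by omega,
      List.getElem?_cons_succ] at this
  · have hkj : k ≤ j := by
      have := Nat.le_of_dvd j.succ_pos hj
      omega
    obtain ⟨d, rfl⟩ := Nat.exists_eq_add_of_le hkj
    rw [List.getElem?_append_right (by omega), hu, Nat.add_sub_cancel_left]
    cases d with
    | zero => simp
    | succ d =>
      rw [List.getElem?_cons_succ]
      refine h d ?_
      rwa [show k + (d + 1) + 1 = (d + 1) + (k + 1) by ring, Nat.dvd_add_self_right] at hj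

theorem sum_Wset_add_two {M : Type*} [AddCommMonoid M] (k i : ℕ) (F : List Bool → M) :
    ∑ w ∈ Wset (k + 1) (i + 2), F w =
      ∑ u ∈ Wset (k + 1) 1, ∑ v ∈ Wset (k + 1) (i + 1), F (u ++ false :: v) := by
  rw [← Finset.sum_product']
  symm
  refine Finset.sum_nbij (fun x => x.1 ++ false :: x.2) ?_ ?_ ?_ fun _ _ => rfl
  · rintro ⟨u, v⟩ hx
    rw [Finset.mem_product, mem_Wset_one] at hx
    exact (append_mem_Wset hx.1).2 hx.2
  · rintro ⟨u, v⟩ hx ⟨u', v'⟩ hx' h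
    rw [Finset.mem_coe, Finset.mem_product, mem_Wset_one] at hx hx'
    obtain ⟨rfl, h⟩ := List.append_inj h (hx.1.trans hx'.1.symm)
    simpa using h
  · intro w hw
    have hmem := mem_Wset.1 hw
    have hlt : k < w.length := by
      rw [hmem.1, show (k + 1) * (i + 2) = (k + 1) * i + 2 * k + 2 by ring]
      omega
    have hk : w[k] = false := by
      simpa [List.getElem?_eq_getElem hlt] using hmem.2 k dvd_rfl
    have hsplit : w.take k ++ false :: w.drop (k + 1) = w := by
      rw [← hk, ← List.drop_eq_getElem_cons, List.take_append_drop]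
    have htake : (w.take k).length = k := List.length_take_of_le hlt.le
    refine ⟨(w.take k, w.drop (k + 1)), ?_, hsplit⟩
    rw [Finset.mem_coe, Finset.mem_product, mem_Wset_one, ← append_mem_Wset htake, hsplit]
    exact ⟨htake, hw⟩

end Words

section Padic

theorem eq_zero_of_forall_pow_dvd {R : Type*} [CommMonoidWithZero R] [IsCancelMulZero R]
    [WfDvdMonoid R] {p x : R} (hp : ¬IsUnit p) (h : ∀ n : ℕ, p ^ n ∣ x) : x = 0 := by
  by_contra hx
  exact (FiniteMultiplicity.of_not_isUnit hp hx).not_pow_dvd_of_multiplicity_lt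
    (Nat.lt_succ_self _) (h _)

theorem eq_zero_of_forall_two_pow_dvd {x : ℤ_[2]} (h : ∀ n : ℕ, 2 ^ n ∣ x) : x = 0 :=
  eq_zero_of_forall_pow_dvd (PadicInt.prime_p (p := 2)).not_isUnit h

theorem summable_pow_mul {p : ℕ} [Fact p.Prime] (u : ℕ → ℤ_[p]) :
    Summable fun i : ℕ => (p : ℤ_[p]) ^ i * u i := by
  have hp : ‖(p : ℤ_[p])‖ < 1 := PadicInt.mem_nonunits.1 PadicInt.p_nonunit
  refine Summable.of_norm_bounded (summable_geometric_of_lt_one (norm_nonneg _) hp) fun i => ?_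
  rw [norm_mul, norm_pow]
  exact mul_le_of_le_one_right (by positivity) (PadicInt.norm_le_one _)

theorem summable_two_pow_mul (u : ℕ → ℤ_[2]) : Summable fun i : ℕ => 2 ^ i * u i :=
  summable_pow_mul (p := 2) u

end Padic

/-- The portrait of an automorphism of `T_∞`: the labelling of the nodes by the parities
`Par(σ,w)`, with `true` for `1`. Every labelling is the portrait of exactly one automorphism, so
`Portrait` also serves as a model of the group `Aut(T_∞)`. -/
structure Portrait where
  toFun : List Bool → Bool

namespace Portrait

section Group

instance : FunLike Portrait (List Bool) Bool where
  coe := toFun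
  coe_injective := fun ⟨_⟩ ⟨_⟩ h => congrArg mk h

@[ext]
theorem ext {p q : Portrait} (h : ∀ w, p w = q w) : p = q := DFunLike.ext _ _ h

/-- The section `p|_x`: the portrait of the automorphism induced between the subtrees hanging
at `x` and at its image, both identified with `T_∞`. -/
def sectionAt (p : Portrait) (x : List Bool) : Portrait := ⟨fun w => p (x ++ w)⟩

theorem sectionAt_apply (p : Portrait) (x w : List Bool) : p.sectionAt x w = p (x ++ w) := rfl

theorem sectionAt_sectionAt (p : Portrait) (x y : List Bool) :
    (p.sectionAt x).sectionAt y = p.sectionAt (x ++ y) := by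
  ext w
  simp [sectionAt_apply]

theorem apply_eq_sectionAt_nil (p : Portrait) (x : List Bool) : p x = p.sectionAt x [] := by
  simp [sectionAt_apply]

theorem ext_root {p q : Portrait} (hnil : p [] = q [])
    (hsec : ∀ s, p.sectionAt [s] = q.sectionAt [s]) : p = q := by
  ext w
  cases w with
  | nil => exact hnil
  | cons s w => exact DFunLike.congr_fun (hsec s) w

/-- The automorphism with portrait `p`, as a map on words. -/
def act : Portrait → List Bool → List Bool
  | _, [] => []
  | p, s :: w => (s ^^ p []) :: act (p.sectionAt [s]) w

/-- The labels of the inverse automorphism. The recursion runs along the image of the path, so the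
letter `s` is first pulled back through the root label. -/
def inverse : Portrait → List Bool → Bool
  | p, [] => p []
  | p, s :: w => inverse (p.sectionAt [s ^^ p []]) w

instance : SMul Portrait (List Bool) := ⟨act⟩

instance : One Portrait := ⟨⟨fun _ => false⟩⟩

instance : Mul Portrait := ⟨fun p q => ⟨fun w => q w ^^ p (q • w)⟩⟩

instance : Inv Portrait := ⟨fun p => ⟨p.inverse⟩⟩

theorem one_apply (w : List Bool) : (1 : Portrait) w = false := rfl

theorem mul_apply (p q : Portrait) (w : List Bool) : (p * q) w = (q w ^^ p (q • w)) := rfl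

theorem smul_nil (p : Portrait) : p • ([] : List Bool) = [] := rfl

theorem smul_cons (p : Portrait) (s : Bool) (w : List Bool) :
    p • (s :: w) = (s ^^ p []) :: p.sectionAt [s] • w := rfl

theorem smul_append (p : Portrait) (x w : List Bool) :
    p • (x ++ w) = p • x ++ p.sectionAt x • w := by
  induction x generalizing p with
  | nil => rfl
  | cons s x ih => simp only [List.cons_append, smul_cons, ih, sectionAt_sectionAt, List.nil_append]

theorem smul_snoc (p : Portrait) (x : List Bool) (s : Bool) :
    p • (x ++ [s]) = p • x ++ [s ^^ p x] := by
  rw [smul_append, smul_cons, smul_nil, ← apply_eq_sectionAt_nil]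

theorem length_smul (p : Portrait) (x : List Bool) : (p • x).length = x.length := by
  induction x generalizing p with
  | nil => rfl
  | cons s x ih => simp [smul_cons, ih]

theorem sectionAt_one (x : List Bool) : (1 : Portrait).sectionAt x = 1 := rfl

theorem sectionAt_mul (p q : Portrait) (x : List Bool) :
    (p * q).sectionAt x = p.sectionAt (q • x) * q.sectionAt x := by
  ext w
  simp only [sectionAt_apply, mul_apply, smul_append]

theorem one_smul_word (x : List Bool) : (1 : Portrait) • x = x := by
  induction x with
  | nil => rfl
  | cons s x ih => rw [smul_cons, one_apply, sectionAt_one, ih, Bool.xor_false]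

theorem mul_smul_word (p q : Portrait) (x : List Bool) : (p * q) • x = p • q • x := by
  induction x generalizing p q with
  | nil => rfl
  | cons s x ih => simp [smul_cons, sectionAt_mul, mul_apply, ih, smul_nil]

theorem inv_apply_smul (p : Portrait) (w : List Bool) : p⁻¹ (p • w) = p w := by
  induction w generalizing p with
  | nil => rfl
  | cons s w ih =>
    calc p⁻¹ (p • (s :: w))
        = (p.sectionAt [(s ^^ p []) ^^ p []])⁻¹ (p.sectionAt [s] • w) := rfl
      _ = p (s :: w) := by
        rw [Bool.xor_assoc, Bool.xor_self, Bool.xor_false, ih]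
        rfl

instance : Group Portrait :=
  Group.ofLeftAxioms
    (fun p q r => by
      ext w
      simp only [mul_apply, mul_smul_word, Bool.xor_assoc])
    (fun p => by
      ext w
      simp only [mul_apply, one_apply, Bool.xor_false])
    (fun p => by
      ext w
      rw [mul_apply, inv_apply_smul, Bool.xor_self, one_apply])

instance : MulAction Portrait (List Bool) where
  one_smul := one_smul_word
  mul_smul := mul_smul_word

theorem inv_apply (p : Portrait) (w : List Bool) : p⁻¹ w = p (p⁻¹ • w) := by
  rw [← inv_apply_smul p, smul_inv_smul]

theorem sectionAt_inv (p : Portrait) (x : List Bool) :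
    p⁻¹.sectionAt x = (p.sectionAt (p⁻¹ • x))⁻¹ :=
  eq_inv_of_mul_eq_one_right <| by rw [← sectionAt_mul, mul_inv_cancel, sectionAt_one]

/-- The element of the stabilizer of the first level that acts by `x.1` below `a` and by `x.2`
below `b`, written `(x.1, x.2)` in the theory of self-similar groups. -/
def pair : Portrait × Portrait →* Portrait where
  toFun x := ⟨fun
    | [] => false
    | s :: w => cond s x.2 x.1 w⟩
  map_one' := ext_root rfl fun s => by cases s <;> rfl
  map_mul' x y := ext_root rfl fun s => by cases s <;> rfl

theorem pair_nil (x : Portrait × Portrait) : pair x [] = false := rfl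

theorem sectionAt_pair_false (x : Portrait × Portrait) : (pair x).sectionAt [false] = x.1 := rfl

theorem sectionAt_pair_true (x : Portrait × Portrait) : (pair x).sectionAt [true] = x.2 := rfl

theorem pair_sectionAt {p : Portrait} (hp : p [] = false) :
    pair (p.sectionAt [false], p.sectionAt [true]) = p :=
  ext_root hp.symm fun s => by cases s <;> rfl

end Group

section LevelStabilizer

/-- The subgroup of automorphisms fixing every word of length at most `m`. -/
def levelStabilizer (m : ℕ) : Subgroup Portrait :=
  fixingSubgroup Portrait {w : List Bool | w.length ≤ m}

theorem mem_levelStabilizer {m : ℕ} {p : Portrait} :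
    p ∈ levelStabilizer m ↔ ∀ w : List Bool, w.length ≤ m → p • w = w :=
  mem_fixingSubgroup_iff Portrait

theorem levelStabilizer_antitone : Antitone levelStabilizer := fun _ _ h =>
  fixingSubgroup_antitone _ _ fun _ hw => le_trans (Set.mem_ofPred.1 hw) h

theorem levelStabilizer_zero : levelStabilizer 0 = ⊤ := by
  refine eq_top_iff.2 fun p _ => mem_levelStabilizer.2 fun w hw => ?_
  rw [List.length_eq_zero_iff.1 (Nat.le_zero.1 hw), smul_nil]

instance (m : ℕ) : (levelStabilizer m).Normal where
  conj_mem p hp g := by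
    rw [mem_levelStabilizer] at hp ⊢
    intro w hw
    rw [mul_smul, mul_smul, hp _ (by rwa [length_smul]), smul_inv_smul]

theorem apply_eq_false_of_mem_levelStabilizer {m : ℕ} {p : Portrait} (hp : p ∈ levelStabilizer m)
    {w : List Bool} (hw : w.length < m) : p w = false := by
  have h := mem_levelStabilizer.1 hp (w ++ [false]) (by simpa using hw)
  rw [smul_snoc] at h
  simpa using List.append_inj_right h (length_smul p w)

theorem sectionAt_mem_levelStabilizer {m : ℕ} {p : Portrait} {x : List Bool}
    (hp : p ∈ levelStabilizer (x.length + m)) : p.sectionAt x ∈ levelStabilizer m := by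
  refine mem_levelStabilizer.2 fun w hw => ?_
  have h := mem_levelStabilizer.1 hp (x ++ w) (by simpa using hw)
  rw [smul_append] at h
  exact List.append_inj_right h (length_smul p x)

theorem pair_mem_levelStabilizer {m : ℕ} {x : Portrait × Portrait}
    (h₁ : x.1 ∈ levelStabilizer m) (h₂ : x.2 ∈ levelStabilizer m) :
    pair x ∈ levelStabilizer (m + 1) := by
  rw [mem_levelStabilizer] at h₁ h₂ ⊢
  rintro (_ | ⟨_ | _, w⟩) hw
  · rfl
  · rw [smul_cons, sectionAt_pair_false, h₁ w (by simpa using hw)]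
    rfl
  · rw [smul_cons, sectionAt_pair_true, h₂ w (by simpa using hw)]
    rfl

theorem mem_sup_levelStabilizer {G : Subgroup Portrait} {m : ℕ} {p : Portrait} :
    p ∈ G ⊔ levelStabilizer m ↔ ∃ t ∈ G, ∀ w : List Bool, w.length ≤ m → p • w = t • w := by
  rw [Subgroup.mem_sup_of_normal_right]
  refine exists_congr fun t => and_congr_right fun _ => ⟨?_, fun h => ⟨t⁻¹ * p, ?_, by group⟩⟩
  · rintro ⟨u, hu, rfl⟩ w hw
    rw [mul_smul, mem_levelStabilizer.1 hu w hw]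
  · refine mem_levelStabilizer.2 fun w hw => ?_
    rw [mul_smul, h w hw, inv_smul_smul]

end LevelStabilizer

section Weight

/-- Half of the value `Q_r(σ,∅)` for the automorphism `σ` with portrait `p`; accordingly
`Q_r(σ,x)` is twice the weight of the section at `x`. -/
noncomputable def weight (r : ℕ) (p : Portrait) : ℤ_[2] :=
  ∑' i : ℕ, 2 ^ i * ∑ w ∈ Wset r (i + 1), ((p w).toNat : ℤ_[2])

theorem weight_one (r : ℕ) : weight r 1 = 0 := by
  simp [weight, one_apply]

theorem weight_eq_sum_sectionAt (k : ℕ) (p : Portrait) :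
    weight (k + 1) p = ∑ w ∈ Wset (k + 1) 1,
      ((p w).toNat + 2 * weight (k + 1) (p.sectionAt (w ++ [false]))) := by
  have hsucc (i : ℕ) : ∑ w ∈ Wset (k + 1) (i + 1 + 1), ((p w).toNat : ℤ_[2]) =
      ∑ u ∈ Wset (k + 1) 1, ∑ v ∈ Wset (k + 1) (i + 1),
        ((p.sectionAt (u ++ [false]) v).toNat : ℤ_[2]) := by
    simp only [sum_Wset_add_two, sectionAt_apply, List.append_assoc, List.singleton_append]
  calc weight (k + 1) p
      = ∑ w ∈ Wset (k + 1) 1, ((p w).toNat : ℤ_[2]) +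
          ∑' i : ℕ, 2 ^ (i + 1) * ∑ w ∈ Wset (k + 1) (i + 1 + 1), ((p w).toNat : ℤ_[2]) := by
        rw [weight, (summable_two_pow_mul _).tsum_eq_zero_add, pow_zero, one_mul]
    _ = ∑ w ∈ Wset (k + 1) 1, ((p w).toNat : ℤ_[2]) +
          2 * ∑ u ∈ Wset (k + 1) 1, weight (k + 1) (p.sectionAt (u ++ [false])) := by
        simp only [hsucc, pow_succ', mul_assoc, weight]
        rw [(summable_two_pow_mul _).tsum_mul_left,
          ← Summable.tsum_finsetSum fun _ _ => summable_two_pow_mul _]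
        simp only [Finset.mul_sum]
    _ = _ := by rw [Finset.sum_add_distrib, Finset.mul_sum]

theorem two_pow_dvd_weight {k n : ℕ} {p : Portrait} (hp : p ∈ levelStabilizer (n * (k + 1))) :
    2 ^ n ∣ weight (k + 1) p := by
  induction n generalizing p with
  | zero => simp
  | succ n ih =>
    rw [weight_eq_sum_sectionAt]
    refine Finset.dvd_sum fun w hw => ?_
    rw [mem_Wset_one] at hw
    have hlabel : p w = false :=
      apply_eq_false_of_mem_levelStabilizer hp (by rw [hw, Nat.succ_mul]; omega)
    have hsec : p.sectionAt (w ++ [false]) ∈ levelStabilizer (n * (k + 1)) := by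
      refine sectionAt_mem_levelStabilizer ?_
      rwa [List.length_append, hw, List.length_singleton, add_comm, ← Nat.succ_mul]
    rw [hlabel, Bool.toNat_false, Nat.cast_zero, zero_add, pow_succ']
    exact mul_dvd_mul_left 2 (ih hsec)

theorem sum_Wset_one_smul {M : Type*} [AddCommMonoid M] (k : ℕ) (q : Portrait)
    (F : List Bool → M) : ∑ w ∈ Wset (k + 1) 1, F (q • w) = ∑ w ∈ Wset (k + 1) 1, F w :=
  Finset.sum_equiv (MulAction.toPerm q) (fun w => by simp [mem_Wset_one, length_smul])
    fun _ _ => rfl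

end Weight

section Balanced

/-- The condition `P_r(σ,x) = 1` for all `x`, after cancelling a factor `2`, where `σ` is the
automorphism with portrait `p`. -/
def IsBalanced (r : ℕ) (p : Portrait) : Prop :=
  ∀ x : List Bool, weight r (p.sectionAt (x ++ [true])) =
    weight r (p.sectionAt (x ++ [false])) + (p x).toNat

variable {k r : ℕ} {p q : Portrait}

theorem isBalanced_one : IsBalanced r 1 := fun _ => by
  simp [sectionAt_one, one_apply]

theorem IsBalanced.sectionAt (hp : IsBalanced r p) (x : List Bool) :
    IsBalanced r (p.sectionAt x) := fun y => by
  simpa only [sectionAt_sectionAt, sectionAt_apply, List.append_assoc] using hp (x ++ y)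

theorem IsBalanced.weight_sectionAt_snoc (hp : IsBalanced r p) (x : List Bool) (s : Bool) :
    weight r (p.sectionAt (x ++ [s])) =
      weight r (p.sectionAt (x ++ [false])) + s.toNat * (p x).toNat := by
  cases s
  · simp
  · simpa using hp x

/-- The failure of the weight to be additive on `p * q`; it vanishes when `p` is balanced. -/
noncomputable def defect (r : ℕ) (p q : Portrait) : ℤ_[2] :=
  weight r (p * q) - (weight r p + weight r q)

theorem IsBalanced.defect_eq_two_mul_sum (hp : IsBalanced (k + 1) p) (q : Portrait) :
    defect (k + 1) p q = 2 * ∑ w ∈ Wset (k + 1) 1,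
      defect (k + 1) (p.sectionAt (q • (w ++ [false]))) (q.sectionAt (w ++ [false])) := by
  have hpq : weight (k + 1) p = ∑ w ∈ Wset (k + 1) 1,
      ((p (q • w)).toNat + 2 * weight (k + 1) (p.sectionAt (q • w ++ [false]))) := by
    rw [weight_eq_sum_sectionAt]
    exact (sum_Wset_one_smul k q _).symm
  rw [defect, hpq, weight_eq_sum_sectionAt k (p * q), weight_eq_sum_sectionAt k q,
    ← Finset.sum_add_distrib, ← Finset.sum_sub_distrib, Finset.mul_sum]
  refine Finset.sum_congr rfl fun w _ => ?_
  rw [defect, sectionAt_mul, smul_snoc, hp.weight_sectionAt_snoc _ (false ^^ q w), mul_apply]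
  cases q w <;> cases p (q • w) <;> simp <;> ring

theorem IsBalanced.two_pow_dvd_defect (n : ℕ) (hp : IsBalanced (k + 1) p) (q : Portrait) :
    2 ^ n ∣ defect (k + 1) p q := by
  induction n generalizing p q with
  | zero => simp
  | succ n ih =>
    rw [hp.defect_eq_two_mul_sum, pow_succ']
    exact mul_dvd_mul_left 2 (Finset.dvd_sum fun w _ => ih (hp.sectionAt _) _)

theorem IsBalanced.weight_mul (hp : IsBalanced (k + 1) p) (q : Portrait) :
    weight (k + 1) (p * q) = weight (k + 1) p + weight (k + 1) q :=
  sub_eq_zero.1 (eq_zero_of_forall_two_pow_dvd fun n => hp.two_pow_dvd_defect n q)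

theorem IsBalanced.weight_inv (hp : IsBalanced (k + 1) p) :
    weight (k + 1) p⁻¹ = -weight (k + 1) p :=
  eq_neg_of_add_eq_zero_right <| by rw [← hp.weight_mul, mul_inv_cancel, weight_one]

theorem IsBalanced.mul (hp : IsBalanced (k + 1) p) (hq : IsBalanced (k + 1) q) :
    IsBalanced (k + 1) (p * q) := by
  have hsec (x : List Bool) (s : Bool) : weight (k + 1) ((p * q).sectionAt (x ++ [s])) =
      weight (k + 1) (p.sectionAt (q • x ++ [false])) +
        (s ^^ q x).toNat * (p (q • x)).toNat + weight (k + 1) (q.sectionAt (x ++ [s])) := by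
    rw [sectionAt_mul, (hp.sectionAt _).weight_mul, smul_snoc, hp.weight_sectionAt_snoc]
  intro x
  rw [hsec, hsec, hq x, mul_apply]
  cases q x <;> cases p (q • x) <;> simp <;> ring

theorem IsBalanced.inv (hp : IsBalanced (k + 1) p) : IsBalanced (k + 1) p⁻¹ := by
  have hsec (x : List Bool) (s : Bool) : weight (k + 1) (p⁻¹.sectionAt (x ++ [s])) =
      -(weight (k + 1) (p.sectionAt (p⁻¹ • x ++ [false])) +
        (s ^^ p⁻¹ x).toNat * (p⁻¹ x).toNat) := by
    rw [sectionAt_inv, (hp.sectionAt _).weight_inv, smul_snoc, hp.weight_sectionAt_snoc,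
      ← inv_apply p x]
  intro x
  rw [hsec, hsec]
  cases p⁻¹ x <;> simp

/-- The subgroup of balanced portraits, which is `B_{r,∞}` for `r = k + 1`. -/
def balanced (k : ℕ) : Subgroup Portrait where
  carrier := {p | IsBalanced (k + 1) p}
  one_mem' := isBalanced_one
  mul_mem' := IsBalanced.mul
  inv_mem' := IsBalanced.inv

theorem isBalanced_of_forall_mem_sup_levelStabilizer {G : Subgroup Portrait} (hG : G ≤ balanced k)
    (h : ∀ m, p ∈ G ⊔ levelStabilizer m) : IsBalanced (k + 1) p := by
  intro x
  refine sub_eq_zero.1 (eq_zero_of_forall_two_pow_dvd fun n => ?_)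
  obtain ⟨t, ht, u, hu, rfl⟩ :=
    Subgroup.mem_sup_of_normal_right.1 (h (x.length + 1 + n * (k + 1)))
  have hbal : IsBalanced (k + 1) t := hG ht
  have hfix (y : List Bool) (hy : y.length ≤ x.length + 1) : u • y = y :=
    mem_levelStabilizer.1 hu y (by omega)
  have hlabel : u x = false := apply_eq_false_of_mem_levelStabilizer hu (by omega)
  have hsec (s : Bool) : weight (k + 1) ((t * u).sectionAt (x ++ [s])) =
      weight (k + 1) (t.sectionAt (x ++ [s])) + weight (k + 1) (u.sectionAt (x ++ [s])) := by
    rw [sectionAt_mul, (hbal.sectionAt _).weight_mul, hfix _ (by simp)]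
  have hdvd (s : Bool) : 2 ^ n ∣ weight (k + 1) (u.sectionAt (x ++ [s])) :=
    two_pow_dvd_weight (sectionAt_mem_levelStabilizer (by simpa using hu))
  rw [hsec, hsec, mul_apply, hlabel, hfix x (by omega), hbal x, Bool.false_xor]
  convert dvd_sub (hdvd true) (hdvd false) using 1
  ring

end Balanced

section Generators

open scoped Classical in
/-- The portrait of `α_{i+1}`: the index `i : Fin r` starts at `0`. -/
noncomputable def generator (r : ℕ) (i : Fin r) : Portrait :=
  ⟨fun w => decide (∃ n : ℕ, w = List.replicate (i : ℕ) false ++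
    (List.replicate n (true :: List.replicate (r - 1) false)).flatten)⟩

theorem generator_apply_eq_true {r : ℕ} {i : Fin r} {w : List Bool} :
    generator r i w = true ↔ ∃ n : ℕ, w = List.replicate (i : ℕ) false ++
      (List.replicate n (true :: List.replicate (r - 1) false)).flatten :=
  @decide_eq_true_iff _ (_)

variable {k : ℕ}

theorem generator_zero_nil : generator (k + 1) 0 [] = true :=
  generator_apply_eq_true.2 ⟨0, rfl⟩

theorem sectionAt_generator_zero_false : (generator (k + 1) 0).sectionAt [false] = 1 := by
  ext w
  rw [one_apply, sectionAt_apply, ← Bool.not_eq_true, generator_apply_eq_true]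
  rintro ⟨_ | n, hn⟩ <;> simp [List.replicate_succ] at hn

theorem sectionAt_generator_zero_true :
    (generator (k + 1) 0).sectionAt [true] = generator (k + 1) (Fin.last k) := by
  ext w
  rw [Bool.eq_iff_iff, sectionAt_apply, generator_apply_eq_true, generator_apply_eq_true]
  constructor
  · rintro ⟨_ | n, hn⟩
    · simp at hn
    · exact ⟨n, by simpa [List.replicate_succ] using hn⟩
  · rintro ⟨n, rfl⟩
    exact ⟨n + 1, by simp [List.replicate_succ]⟩

theorem generator_succ (i : Fin k) :
    generator (k + 1) i.succ = pair (generator (k + 1) i.castSucc, 1) := by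
  refine ext_root ?_ fun s => ?_
  · rw [pair_nil]
    simp [← Bool.not_eq_true, generator_apply_eq_true, List.replicate_succ]
  · ext w
    cases s
    · rw [sectionAt_pair_false, Bool.eq_iff_iff, sectionAt_apply, generator_apply_eq_true,
        generator_apply_eq_true]
      simp [List.replicate_succ]
    · rw [sectionAt_pair_true, one_apply, sectionAt_apply, ← Bool.not_eq_true,
        generator_apply_eq_true]
      simp [List.replicate_succ]

theorem generator_zero_sq : generator (k + 1) 0 ^ 2 =
    pair (generator (k + 1) (Fin.last k), generator (k + 1) (Fin.last k)) := by
  refine ext_root ?_ fun s => ?_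
  · rw [pow_two, mul_apply, smul_nil, Bool.xor_self]
    rfl
  · rw [pow_two, sectionAt_mul, smul_cons, generator_zero_nil, smul_nil]
    cases s
    · rw [sectionAt_generator_zero_false, Bool.false_xor, sectionAt_generator_zero_true, mul_one,
        sectionAt_pair_false]
    · rw [sectionAt_generator_zero_true, Bool.xor_self, sectionAt_generator_zero_false, one_mul,
        sectionAt_pair_true]

theorem generator_zero_mul_pair (p : Portrait) :
    generator (k + 1) 0 * pair (p, 1) = pair (1, p) * generator (k + 1) 0 := by
  refine ext_root ?_ fun s => ?_
  · rw [mul_apply, mul_apply, smul_nil, smul_nil, Bool.xor_comm]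
    rfl
  · rw [sectionAt_mul, sectionAt_mul, smul_cons, smul_cons, generator_zero_nil, smul_nil, smul_nil]
    cases s
    · change (generator (k + 1) 0).sectionAt [false] * p =
        p * (generator (k + 1) 0).sectionAt [false]
      rw [sectionAt_generator_zero_false, one_mul, mul_one]
    · change (generator (k + 1) 0).sectionAt [true] * 1 =
        1 * (generator (k + 1) 0).sectionAt [true]
      rw [one_mul, mul_one]

theorem generator_apply_of_mem_Wset {i : Fin (k + 1)} {j : ℕ} {w : List Bool}
    (hw : w ∈ Wset (k + 1) (j + 1)) :
    generator (k + 1) i w = true ↔ i = Fin.last k ∧ w = List.replicate k false := by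
  obtain ⟨hlen, hlabels⟩ := mem_Wset.1 hw
  rw [generator_apply_eq_true]
  refine ⟨?_, fun ⟨hi, hw⟩ => ⟨0, by simp [hi, hw]⟩⟩
  rintro ⟨n, rfl⟩
  have hsum : (i : ℕ) + 1 + (k + 1) * n = (k + 1) * (j + 1) := by
    have : 0 < (k + 1) * (j + 1) := by positivity
    simp [mul_comm n] at hlen
    omega
  have hdvd : k + 1 ∣ (i : ℕ) + 1 :=
    (Nat.dvd_add_left (dvd_mul_right _ n)).1 (hsum ▸ dvd_mul_right _ _)
  have hi : i = Fin.last k :=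
    Fin.ext (le_antisymm i.is_le (Nat.le_of_succ_le_succ (Nat.le_of_dvd i.val.succ_pos hdvd)))
  subst hi
  cases n with
  | zero => simp
  | succ n => exact absurd (by simp [List.replicate_succ]) (hlabels k dvd_rfl)

theorem weight_generator_castSucc (i : Fin k) :
    weight (k + 1) (generator (k + 1) i.castSucc) = 0 := by
  have hlabel (j : ℕ) (w) (hw : w ∈ Wset (k + 1) (j + 1)) :
      ((generator (k + 1) i.castSucc w).toNat : ℤ_[2]) = 0 := by
    have := (generator_apply_of_mem_Wset hw).not.2 fun h => i.castSucc_ne_last h.1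
    simp [Bool.eq_false_iff.2 this]
  simp only [weight, Finset.sum_congr rfl (hlabel _), Finset.sum_const_zero, mul_zero, tsum_zero]

theorem weight_generator_last : weight (k + 1) (generator (k + 1) (Fin.last k)) = 1 := by
  have hlabel (j : ℕ) (w) (hw : w ∈ Wset (k + 1) (j + 1)) :
      ((generator (k + 1) (Fin.last k) w).toNat : ℤ_[2]) =
        if w = List.replicate k false then 1 else 0 := by
    have := generator_apply_of_mem_Wset (i := Fin.last k) hw
    split_ifs with h <;> simp_all
  have hmem (j : ℕ) : List.replicate k false ∈ Wset (k + 1) (j + 1) ↔ j = 0 := by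
    refine ⟨fun h => ?_, fun h => h ▸ mem_Wset_one.2 List.length_replicate⟩
    have hlen := (mem_Wset.1 h).1
    rw [List.length_replicate, Nat.mul_succ] at hlen
    have hzero : (k + 1) * j = 0 := by omega
    exact (Nat.mul_eq_zero.1 hzero).resolve_left k.succ_ne_zero
  simp only [weight, Finset.sum_congr rfl (hlabel _), Finset.sum_ite_eq', hmem]
  rw [tsum_eq_single 0 fun j hj => by simp [hj]]
  simp

theorem isBalanced_generator (i : Fin (k + 1)) : IsBalanced (k + 1) (generator (k + 1) i) := by
  intro x
  induction x generalizing i with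
  | nil =>
    rw [List.nil_append, List.nil_append]
    cases i using Fin.cases with
    | zero =>
      rw [sectionAt_generator_zero_true, sectionAt_generator_zero_false, weight_generator_last,
        weight_one, generator_zero_nil, Bool.toNat_true, Nat.cast_one, zero_add]
    | succ i =>
      rw [generator_succ, sectionAt_pair_true, sectionAt_pair_false, weight_generator_castSucc,
        weight_one, pair_nil, Bool.toNat_false, Nat.cast_zero, zero_add]
  | cons s x ih =>
    change weight (k + 1) (((generator (k + 1) i).sectionAt [s]).sectionAt (x ++ [true])) =
      weight (k + 1) (((generator (k + 1) i).sectionAt [s]).sectionAt (x ++ [false])) +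
        ((generator (k + 1) i).sectionAt [s] x).toNat
    cases i using Fin.cases with
    | zero =>
      cases s
      · rw [sectionAt_generator_zero_false]
        exact isBalanced_one x
      · rw [sectionAt_generator_zero_true]
        exact ih _
    | succ i =>
      rw [generator_succ]
      cases s
      · exact ih _
      · exact isBalanced_one x

theorem generator_pow_two_pow_mem_levelStabilizer (n : ℕ) (i : Fin (k + 1)) :
    generator (k + 1) i ^ 2 ^ n ∈ levelStabilizer (n * (k + 1) + i) := by
  induction n generalizing i with
  | zero =>
    induction i using Fin.induction with
    | zero => simp [levelStabilizer_zero]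
    | succ i ih =>
      rw [generator_succ, ← map_pow, Prod.pow_mk, one_pow]
      exact pair_mem_levelStabilizer ih (one_mem _)
  | succ n ihn =>
    induction i using Fin.induction with
    | zero =>
      rw [pow_succ', pow_mul, generator_zero_sq, ← map_pow, Prod.pow_mk, Nat.succ_mul]
      exact pair_mem_levelStabilizer (ihn (Fin.last k)) (ihn (Fin.last k))
    | succ i ih =>
      rw [generator_succ, ← map_pow, Prod.pow_mk, one_pow]
      exact pair_mem_levelStabilizer ih (one_mem _)

end Generators

section PinkSubgroup

/-- The subgroup generated by the portraits of `α_1, …, α_r`. -/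
noncomputable def pinkSubgroup (r : ℕ) : Subgroup Portrait :=
  Subgroup.closure (Set.range (generator r))

theorem generator_mem_pinkSubgroup {r : ℕ} (i : Fin r) : generator r i ∈ pinkSubgroup r :=
  Subgroup.subset_closure ⟨i, rfl⟩

variable {k : ℕ}

theorem pinkSubgroup_le_balanced : pinkSubgroup (k + 1) ≤ balanced k := by
  rw [pinkSubgroup, Subgroup.closure_le]
  rintro _ ⟨i, rfl⟩
  exact isBalanced_generator i

theorem pair_left_mem_pinkSubgroup (i : Fin k) :
    pair (generator (k + 1) i.castSucc, 1) ∈ pinkSubgroup (k + 1) :=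
  generator_succ i ▸ generator_mem_pinkSubgroup i.succ

theorem pair_right_mem_pinkSubgroup (i : Fin k) :
    pair (1, generator (k + 1) i.castSucc) ∈ pinkSubgroup (k + 1) := by
  rw [← mul_inv_eq_of_eq_mul (generator_zero_mul_pair _)]
  exact mul_mem (mul_mem (generator_mem_pinkSubgroup 0) (pair_left_mem_pinkSubgroup i))
    (inv_mem (generator_mem_pinkSubgroup 0))

theorem pair_last_mem_pinkSubgroup :
    pair (generator (k + 1) (Fin.last k), generator (k + 1) (Fin.last k)) ∈
      pinkSubgroup (k + 1) :=
  generator_zero_sq (k := k) ▸ pow_mem (generator_mem_pinkSubgroup 0) 2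

theorem exists_weight_eq_intCast_and_pair_mem {g : Portrait} (hg : g ∈ pinkSubgroup (k + 1)) :
    ∃ c : ℤ, weight (k + 1) g = c ∧
      pair (g, generator (k + 1) (Fin.last k) ^ c) ∈ pinkSubgroup (k + 1) ∧
      pair (generator (k + 1) (Fin.last k) ^ c, g) ∈ pinkSubgroup (k + 1) := by
  induction hg using Subgroup.closure_induction with
  | mem x hx =>
    obtain ⟨i, rfl⟩ := hx
    cases i using Fin.lastCases with
    | last =>
      refine ⟨1, by rw [weight_generator_last, Int.cast_one], ?_, ?_⟩ <;> rw [zpow_one] <;>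
        exact pair_last_mem_pinkSubgroup
    | cast i =>
      refine ⟨0, by rw [weight_generator_castSucc, Int.cast_zero], ?_, ?_⟩ <;> rw [zpow_zero]
      · exact pair_left_mem_pinkSubgroup i
      · exact pair_right_mem_pinkSubgroup i
  | one => exact ⟨0, by rw [weight_one, Int.cast_zero], by simp [← Prod.one_eq_mk, one_mem]⟩
  | mul x y hx _ ihx ihy =>
    obtain ⟨c, hxc, hxl, hxr⟩ := ihx
    obtain ⟨d, hyd, hyl, hyr⟩ := ihy
    refine ⟨c + d, ?_, ?_, ?_⟩
    · rw [(pinkSubgroup_le_balanced hx).weight_mul, hxc, hyd, Int.cast_add]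
    · simpa only [zpow_add, ← map_mul, Prod.mk_mul_mk] using mul_mem hxl hyl
    · simpa only [zpow_add, ← map_mul, Prod.mk_mul_mk] using mul_mem hxr hyr
  | inv x hx ih =>
    obtain ⟨c, hxc, hxl, hxr⟩ := ih
    refine ⟨-c, ?_, ?_, ?_⟩
    · rw [(pinkSubgroup_le_balanced hx).weight_inv, hxc, Int.cast_neg]
    · simpa only [zpow_neg, ← map_inv, Prod.inv_mk] using inv_mem hxl
    · simpa only [zpow_neg, ← map_inv, Prod.inv_mk] using inv_mem hxr

/-- With `c`, `d` the weights of `g`, `h`, the pair is `(g, α_r^c) (α_r, α_r)^{-d} (α_r^d, h)`. -/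
theorem exists_pair_mul_mem_of_two_pow_dvd {n : ℕ} {g h : Portrait} (hg : g ∈ pinkSubgroup (k + 1))
    (hh : h ∈ pinkSubgroup (k + 1)) (hdvd : 2 ^ n ∣ weight (k + 1) g - weight (k + 1) h) :
    ∃ u ∈ levelStabilizer (n * (k + 1) + k), pair (g, u * h) ∈ pinkSubgroup (k + 1) := by
  obtain ⟨c, hgc, hgl, -⟩ := exists_weight_eq_intCast_and_pair_mem hg
  obtain ⟨d, hhd, -, hhr⟩ := exists_weight_eq_intCast_and_pair_mem hh
  obtain ⟨z, hz⟩ : 2 ^ n ∣ c - d := by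
    rw [hgc, hhd, ← Int.cast_sub] at hdvd
    exact (PadicInt.pow_p_dvd_int_iff n _).1 hdvd
  refine ⟨generator (k + 1) (Fin.last k) ^ (c - d), ?_, ?_⟩
  · have := zpow_mem (generator_pow_two_pow_mem_levelStabilizer n (Fin.last k)) z
    rw [hz, zpow_mul]
    exact_mod_cast this
  · convert mul_mem (mul_mem hgl (zpow_mem (pair_last_mem_pinkSubgroup (k := k)) (-d))) hhr using 1
    rw [← map_zpow, ← map_mul, ← map_mul, Prod.pow_mk, Prod.mk_mul_mk, Prod.mk_mul_mk]
    congr 2 <;> group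

theorem mem_sup_levelStabilizer_succ_of_root {m : ℕ} {p : Portrait} (hp : IsBalanced (k + 1) p)
    (hnil : p [] = false)
    (hsec : ∀ s, p.sectionAt [s] ∈ pinkSubgroup (k + 1) ⊔ levelStabilizer m) :
    p ∈ pinkSubgroup (k + 1) ⊔ levelStabilizer (m + 1) := by
  obtain ⟨g, hg, u, hu, hgu⟩ := Subgroup.mem_sup_of_normal_right.1 (hsec false)
  obtain ⟨h, hh, v, hv, hhv⟩ := Subgroup.mem_sup_of_normal_right.1 (hsec true)
  have hle : m / (k + 1) * (k + 1) ≤ m := Nat.div_mul_le_self m (k + 1)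
  have hge : m ≤ m / (k + 1) * (k + 1) + k := Nat.le_of_lt_succ (Nat.lt_div_mul_add k.succ_pos)
  have hdvd : 2 ^ (m / (k + 1)) ∣ weight (k + 1) g - weight (k + 1) h := by
    have hroot := hp []
    rw [List.nil_append, List.nil_append, hnil, ← hgu, ← hhv,
      (pinkSubgroup_le_balanced hg).weight_mul, (pinkSubgroup_le_balanced hh).weight_mul,
      Bool.toNat_false, Nat.cast_zero, add_zero] at hroot
    have heq : weight (k + 1) g - weight (k + 1) h = weight (k + 1) v - weight (k + 1) u := by
      linear_combination -hroot
    rw [heq]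
    exact dvd_sub (two_pow_dvd_weight (levelStabilizer_antitone hle hv))
      (two_pow_dvd_weight (levelStabilizer_antitone hle hu))
  obtain ⟨t, ht, hpair⟩ := exists_pair_mul_mem_of_two_pow_dvd hg hh hdvd
  have hsplit : p = pair (1, t⁻¹) * (pair (g, t * h) * pair (u, v)) := by
    rw [← pair_sectionAt hnil, ← hgu, ← hhv, ← map_mul, ← map_mul, Prod.mk_mul_mk,
      Prod.mk_mul_mk, one_mul, mul_assoc t, inv_mul_cancel_left]
  have htm : t⁻¹ ∈ levelStabilizer m := inv_mem (levelStabilizer_antitone hge ht)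
  rw [hsplit]
  exact mul_mem (Subgroup.mem_sup_right (pair_mem_levelStabilizer (one_mem _) htm))
    (mul_mem (Subgroup.mem_sup_left hpair)
      (Subgroup.mem_sup_right (pair_mem_levelStabilizer hu hv)))

theorem IsBalanced.mem_sup_levelStabilizer {p : Portrait} (hp : IsBalanced (k + 1) p) (m : ℕ) :
    p ∈ pinkSubgroup (k + 1) ⊔ levelStabilizer m := by
  induction m generalizing p with
  | zero => simp [levelStabilizer_zero]
  | succ m ih =>
    have hroot {q : Portrait} (hq : IsBalanced (k + 1) q) (hnil : q [] = false) :
        q ∈ pinkSubgroup (k + 1) ⊔ levelStabilizer (m + 1) :=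
      mem_sup_levelStabilizer_succ_of_root hq hnil fun s => ih (hq.sectionAt [s])
    cases hnil : p [] with
    | false => exact hroot hp hnil
    | true =>
      refine (mul_mem_cancel_left (Subgroup.mem_sup_left (generator_mem_pinkSubgroup 0))).1
        (hroot ((isBalanced_generator 0).mul hp) ?_)
      rw [mul_apply, smul_nil, hnil, generator_zero_nil, Bool.xor_self]

theorem isBalanced_iff_forall_mem_sup_levelStabilizer {p : Portrait} :
    IsBalanced (k + 1) p ↔ ∀ m, p ∈ pinkSubgroup (k + 1) ⊔ levelStabilizer m :=
  ⟨IsBalanced.mem_sup_levelStabilizer,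
    isBalanced_of_forall_mem_sup_levelStabilizer pinkSubgroup_le_balanced⟩

end PinkSubgroup

section TreeAutomorphism

/-- The portrait of the automorphism `σ`, whose label at `x` is `Par(σ,x)`. -/
def portraitOf (σ : List Bool → List Bool) : Portrait := ⟨fun x => decide (par σ x = 1)⟩

variable {r : ℕ} {σ : List Bool → List Bool}

theorem portraitOf_apply_eq_true {x : List Bool} : portraitOf σ x = true ↔ par σ x = 1 :=
  decide_eq_true_iff

theorem par_eq_toNat (σ : List Bool → List Bool) (x : List Bool) :
    par σ x = (portraitOf σ x).toNat := by
  change par σ x = (decide (par σ x = 1)).toNat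
  rw [par]
  split_ifs <;> rfl

theorem apply_snoc_of_isTreeAut (hσ : IsTreeAut σ) (x : List Bool) (s : Bool) :
    σ (x ++ [s]) = σ x ++ [s ^^ portraitOf σ x] := by
  obtain ⟨t₀, h₀⟩ := hσ.2.2 x false
  obtain ⟨t₁, h₁⟩ := hσ.2.2 x true
  have hne : t₀ ≠ t₁ := by
    rintro rfl
    simpa using hσ.1.1 (h₀.trans h₁.symm)
  have hlabel : portraitOf σ x = t₀ := by
    rw [Bool.eq_iff_iff, portraitOf_apply_eq_true, par, h₀]
    cases t₀ <;> simp
  rw [hlabel]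
  cases s
  · rw [h₀, Bool.false_xor]
  · rw [h₁, Bool.true_xor, Bool.eq_not_of_ne hne.symm]

theorem portraitOf_smul (hσ : IsTreeAut σ) (w : List Bool) : portraitOf σ • w = σ w := by
  induction w using List.reverseRecOn with
  | nil => exact (List.length_eq_zero_iff.1 (hσ.2.1 [])).symm
  | append_singleton x s ih => rw [smul_snoc, ih, apply_snoc_of_isTreeAut hσ]

theorem Qr_eq_two_mul_weight (r : ℕ) (σ : List Bool → List Bool) (x : List Bool) :
    Qr r σ x = 2 * weight r ((portraitOf σ).sectionAt x) := by
  rw [weight, ← (summable_two_pow_mul _).tsum_mul_left]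
  simp only [Qr, par_eq_toNat, pow_succ', mul_assoc, sectionAt_apply]

theorem Pr_eq_one_iff {x : List Bool} : Pr r σ x = 1 ↔
    weight r ((portraitOf σ).sectionAt (x ++ [true])) =
      weight r ((portraitOf σ).sectionAt (x ++ [false])) + (portraitOf σ x).toNat := by
  have hsign : (-1 : ℤ_[2]) ^ (portraitOf σ x).toNat = 1 - 2 * (portraitOf σ x).toNat := by
    cases portraitOf σ x <;> norm_num
  rw [Pr, Qr_eq_two_mul_weight, Qr_eq_two_mul_weight, par_eq_toNat, hsign]
  refine ⟨fun h => mul_left_cancel₀ (two_ne_zero (α := ℤ_[2])) ?_, fun h => ?_⟩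
  · linear_combination h
  · linear_combination 2 * h

theorem mem_Bset_iff (hσ : IsTreeAut σ) : σ ∈ Bset r ↔ IsBalanced r (portraitOf σ) := by
  refine ⟨fun h x => Pr_eq_one_iff.1 ((h.1.2 x []).trans h.2), fun h => ?_⟩
  have hone (x : List Bool) : Pr r σ x = 1 := Pr_eq_one_iff.2 (h x)
  exact ⟨⟨hσ, fun x₁ x₂ => (hone x₁).trans (hone x₂).symm⟩, hone []⟩

theorem closure_range_eq_map_pinkSubgroup {α : Fin r → Equiv.Perm (List Bool)}
    (haut : ∀ i, IsTreeAut (α i)) (hα : ∀ i, portraitOf (α i) = generator r i) :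
    Subgroup.closure (Set.range α) =
      (pinkSubgroup r).map (MulAction.toPermHom Portrait (List Bool)) := by
  have hperm : α = MulAction.toPermHom Portrait (List Bool) ∘ generator r := by
    ext i : 2
    rw [← portraitOf_smul (haut i), hα]
    rfl
  rw [pinkSubgroup, MonoidHom.map_closure, ← Set.range_comp, ← hperm]

end TreeAutomorphism

end Portrait

/-- Fix `r ≥ 1`, and for `i ∈ {1,…,r}` (here indexed by `i : Fin r`,
corresponding to the generator `α_{i+1}`) let `α i` be the automorphism of `T_∞`
determined by `Par(α i, w) = 1` iff `w = a^{i}(ba^{r−1})^n` for some `n ≥ 0`.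
Then `B_{r,∞}` is the closure of the subgroup generated by `α_1, …, α_r` in the topology
of pointwise convergence: a tree automorphism `σ` lies in `B_{r,∞}` iff for every `m ≥ 1`
there is an element `τ` of the subgroup generated by the `α i` agreeing with `σ` on all
words of length at most `m`. -/
theorem B_eq_closure_Pink (r : ℕ) (hr : 1 ≤ r) (α : Fin r → Equiv.Perm (List Bool))
    (hαaut : ∀ i : Fin r, IsTreeAut ⇑(α i))
    (hpar : ∀ (i : Fin r) (w : List Bool), (par ⇑(α i) w = 1 ↔ ∃ n : ℕ,
      w = List.replicate (i : ℕ) false ++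
        (List.replicate n (true :: List.replicate (r-1) false)).flatten))
    (σ : Equiv.Perm (List Bool)) (hσ : IsTreeAut ⇑σ) :
    ⇑σ ∈ Bset r ↔ ∀ m : ℕ, 1 ≤ m → ∃ τ ∈ Subgroup.closure (Set.range α),
      ∀ w : List Bool, w.length ≤ m → σ w = τ w := by
  obtain ⟨k, rfl⟩ : ∃ k, r = k + 1 := ⟨r - 1, by omega⟩
  have hα (i : Fin (k + 1)) : Portrait.portraitOf (α i) = Portrait.generator (k + 1) i := by
    ext w
    rw [Bool.eq_iff_iff, Portrait.portraitOf_apply_eq_true, Portrait.generator_apply_eq_true]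
    exact hpar i w
  rw [Portrait.closure_range_eq_map_pinkSubgroup hαaut hα, Portrait.mem_Bset_iff hσ,
    Portrait.isBalanced_iff_forall_mem_sup_levelStabilizer]
  simp only [Portrait.mem_sup_levelStabilizer, Portrait.portraitOf_smul hσ,
    Subgroup.mem_map, exists_exists_and_eq_and, MulAction.toPermHom_apply, MulAction.toPerm_apply]
  refine ⟨fun h m _ => h m, fun h m => ?_⟩
  obtain ⟨τ, hτ, hagree⟩ := h (m + 1) m.succ_pos
  exact ⟨τ, hτ, fun w hw => hagree w (Nat.le_succ_of_le hw)⟩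
end

section
/- Let k be a field of characteristic not equal to 2 and f(z) = z² + c ∈ k[z] with f^r(0) = 0 for some integer r ≥ 1. Let K = k(t) be the rational function field, fix an algebraic closure of k(t), let K_n be the splitting field of f^n(X) − t over k(t) inside this closure, K_∞ = ⋃_{n≥1} K_n, and let k̄ be the algebraic closure of k inside the same closure. Then K_∞ ∩ k̄ = k(μ_{2^∞}), the field obtained from k by adjoining all roots of unity of 2-power order. -/
open Polynomial

/-!
For `K_∞ ∩ k̄ ⊆ L := k(μ_{2^∞})`, put a pole at the place `t = ∞`: after the substitution
`t = X ^ (-2 ^ n)` the polynomial `f^n - t` splits over `L((X))`. Its roots are found by `n`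
successive square roots, each of them of a series whose leading coefficient is a `2`-power root of
unity, a square in `L`, and adding the constant `c` does not affect leading coefficients. So `K_n`
embeds in `L((X))`. An element of `K_n` algebraic over `k` becomes a power series there, its
constant coefficient is a conjugate of it lying in `L`, and `L / k` is normal.

For `k(μ_{2^∞}) ⊆ K_∞`, let `z` run over the iterated preimages of `t`. If `±y` are the preimages
of `z`, then `z - f(a) = -(y - a)(-y - a)`. Hence if all `(z - a)²` are `N`-th powers in `K_∞`,
so are all `(z - f(a))²`. At the critical point one gains a factor `2`, since `z - f(0) = y²`. Going
around the cycle of `0` repeatedly, `z²` is a `2 ^ m`-th power in `K_∞` for every `m`, and therefore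
so is `t - c`. As `X ^ 2 ^ m - (t - c)` is irreducible by Eisenstein and `K_∞` is normal, all
roots of this polynomial lie in `K_∞`, and so do their quotients.
-/

open scoped PowerSeries

section TwoPowRootsOfUnity

/-- The set `μ_{2^∞}` of elements of `R` of finite `2`-power multiplicative order. -/
def twoPowRootsOfUnity (R : Type*) [Monoid R] : Set R :=
  {x | ∃ n : ℕ, x ^ 2 ^ n = 1}

theorem one_mem_twoPowRootsOfUnity {R : Type*} [Monoid R] : (1 : R) ∈ twoPowRootsOfUnity R :=
  ⟨0, one_pow _⟩

theorem sq_mem_twoPowRootsOfUnity_iff {R : Type*} [Monoid R] {x : R} :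
    x ^ 2 ∈ twoPowRootsOfUnity R ↔ x ∈ twoPowRootsOfUnity R := by
  refine ⟨fun ⟨n, hn⟩ ↦ ⟨n + 1, by rwa [pow_succ', pow_mul]⟩, fun ⟨n, hn⟩ ↦ ⟨n, ?_⟩⟩
  rw [pow_right_comm, hn, one_pow]

theorem neg_mem_twoPowRootsOfUnity {R : Type*} [Ring R] {x : R}
    (hx : x ∈ twoPowRootsOfUnity R) : -x ∈ twoPowRootsOfUnity R := by
  rwa [← sq_mem_twoPowRootsOfUnity_iff, neg_sq, sq_mem_twoPowRootsOfUnity_iff]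

theorem isUnit_of_mem_twoPowRootsOfUnity {R : Type*} [Monoid R] {x : R}
    (hx : x ∈ twoPowRootsOfUnity R) : IsUnit x :=
  let ⟨_, hn⟩ := hx
  IsUnit.of_pow_eq_one hn (by positivity)

end TwoPowRootsOfUnity

section NormalExtensions

variable {K Ω : Type*} [Field K] [Field Ω] [Algebra K Ω]

theorem mem_of_normal_of_minpoly_eq {E : IntermediateField K Ω} [hE : Normal K E] {x : Ω} {a : E}
    (ha : minpoly K a = minpoly K x) : x ∈ E :=
  have hx : IsIntegral K x := minpoly.ne_zero_iff.1 (ha ▸ minpoly.ne_zero (hE.isIntegral a))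
  hx.mem_intermediateField_of_minpoly_splits (ha ▸ hE.splits a)

theorem mem_of_aeval_eq_zero_of_irreducible {E : IntermediateField K Ω} [Normal K E] {p : K[X]}
    (hp : Irreducible p) {w x : Ω} (hw : aeval w p = 0) (hx : aeval x p = 0) (hwE : w ∈ E) :
    x ∈ E := by
  refine mem_of_normal_of_minpoly_eq (a := ⟨w, hwE⟩) ?_
  rw [IntermediateField.minpoly_eq, ← minpoly.eq_of_irreducible hp hw,
    minpoly.eq_of_irreducible hp hx]

theorem mem_of_pow_eq_one_of_irreducible {E : IntermediateField K Ω} [Normal K E]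
    {a : K} {n : ℕ} (ha : Irreducible (X ^ n - C a)) {w x : Ω} (hw : w ∈ E)
    (hwa : w ^ n = algebraMap K Ω a) (hw0 : w ≠ 0) (hx : x ^ n = 1) : x ∈ E := by
  have hxw : x * w ∈ E :=
    mem_of_aeval_eq_zero_of_irreducible ha (by simp [hwa]) (by simp [mul_pow, hx, hwa]) hw
  simpa [hw0] using div_mem hxw hw

theorem normal_iSup_adjoin_rootSet [IsAlgClosed Ω] {ι : Type*} (p : ι → K[X]) :
    Normal K (⨆ i, IntermediateField.adjoin K ((p i).rootSet Ω) : IntermediateField K Ω) :=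
  IntermediateField.normal_iSup (h := fun i ↦ Normal.of_isSplittingField (p i)
    (hFEp := IntermediateField.adjoin_rootSet_isSplittingField (IsAlgClosed.splits _)))

theorem twoPowRootsOfUnity_eq_iUnion_rootSet :
    twoPowRootsOfUnity Ω = ⋃ n : ℕ, (X ^ 2 ^ n - C 1 : K[X]).rootSet Ω := by
  ext x
  have hne (n : ℕ) : (X ^ 2 ^ n - C 1 : K[X]) ≠ 0 := X_pow_sub_C_ne_zero (by positivity) 1
  simp only [twoPowRootsOfUnity, Set.mem_ofPred_eq, Set.mem_iUnion, mem_rootSet_of_ne (hne _)]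
  simp [sub_eq_zero]

theorem normal_adjoin_twoPowRootsOfUnity [IsAlgClosed Ω] :
    Normal K (IntermediateField.adjoin K (twoPowRootsOfUnity Ω)) := by
  rw [twoPowRootsOfUnity_eq_iUnion_rootSet (K := K), IntermediateField.adjoin_iUnion]
  exact normal_iSup_adjoin_rootSet _

theorem isSquare_of_mem_twoPowRootsOfUnity_adjoin [IsAlgClosed Ω]
    {a : IntermediateField.adjoin K (twoPowRootsOfUnity Ω)}
    (ha : a ∈ twoPowRootsOfUnity (IntermediateField.adjoin K (twoPowRootsOfUnity Ω))) :
    IsSquare a := by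
  obtain ⟨n, hn⟩ := ha
  obtain ⟨b, hb⟩ := IsAlgClosed.exists_pow_nat_eq (a : Ω) two_pos
  have hbμ : b ∈ twoPowRootsOfUnity Ω :=
    sq_mem_twoPowRootsOfUnity_iff.1 ⟨n, by rw [hb]; exact_mod_cast congrArg Subtype.val hn⟩
  refine (isSquare_iff_exists_sq _).2 ⟨⟨b, IntermediateField.subset_adjoin _ _ hbμ⟩, ?_⟩
  exact Subtype.ext hb.symm

theorem nonempty_algHom_adjoin_rootSet_of_splits {k M : Type*} [Field k] [Algebra k K] [Algebra k Ω]
    [IsScalarTower k K Ω] [Field M] [Algebra k M] (φ : K →ₐ[k] M) {p : K[X]}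
    (h : (p.map (φ : K →+* M)).Splits) :
    Nonempty ((IntermediateField.adjoin K (p.rootSet Ω)).restrictScalars k →ₐ[k] M) := by
  algebraize [(φ : K →+* M)]
  have : IsScalarTower k K M := .of_algebraMap_eq' φ.comp_algebraMap.symm
  suffices Nonempty (IntermediateField.adjoin K (p.rootSet Ω) →ₐ[K] M) from
    this.map fun ψ ↦ ψ.restrictScalars k
  refine IntermediateField.nonempty_algHom_adjoin_of_splits fun s hs ↦ ?_
  have hp := ne_zero_of_mem_rootSet hs
  have hps := aeval_eq_zero_of_mem_rootSet hs
  exact ⟨IsAlgebraic.isIntegral ⟨p, hp, hps⟩,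
    h.of_dvd (map_ne_zero hp) (Polynomial.map_dvd _ (minpoly.dvd _ _ hps))⟩

end NormalExtensions

theorem irreducible_X_pow_sub_C_of_prime {R : Type*} (K : Type*) [CommRing R] [IsDomain R]
    [IsIntegrallyClosed R] [Field K] [Algebra R K] [IsFractionRing R K] {p : R} (hp : Prime p)
    {n : ℕ} (hn : n ≠ 0) : Irreducible (X ^ n - C (algebraMap R K p)) := by
  have hmonic : (X ^ n - C p).Monic := monic_X_pow_sub_C p hn
  have hdeg : (X ^ n - C p).natDegree = n := natDegree_X_pow_sub_C
  have hprime : (Ideal.span {p}).IsPrime := (Ideal.span_singleton_prime hp.ne_zero).2 hp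
  have heis : (X ^ n - C p).IsEisensteinAt (Ideal.span {p}) := by
    refine hmonic.isEisensteinAt_of_mem_of_notMem hprime.ne_top (fun {i} hi ↦ ?_) ?_
    · rw [hdeg] at hi
      rw [coeff_sub, coeff_X_pow, if_neg hi.ne, zero_sub, neg_mem_iff, coeff_C]
      split_ifs
      exacts [Ideal.mem_span_singleton_self p, zero_mem _]
    · have : ¬ p ^ 2 ∣ p := fun h ↦ hp.not_isUnit (hp.irreducible.squarefree p (sq p ▸ h))
      simpa [hn.symm, coeff_X_pow, Ideal.span_singleton_pow, Ideal.mem_span_singleton] using this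
  have hirr := heis.irreducible hprime hmonic.isPrimitive (by omega)
  rw [hmonic.irreducible_iff_irreducible_map_fraction_map (K := K)] at hirr
  simpa using hirr

theorem exists_minpoly_eq_of_isIntegral_fractionRing {k R L M : Type*} [Field k]
    [CommRing R] [IsIntegrallyClosed R] [Algebra k R] [Field L] [Algebra k L] [Field M]
    [Algebra k M] [Algebra R M] [IsFractionRing R M] [IsScalarTower k R M] (ρ : R →ₐ[k] L) {y : M}
    (hy : IsIntegral k y) : ∃ a : L, minpoly k a = minpoly k y := by
  obtain ⟨v, rfl⟩ := IsIntegrallyClosed.algebraMap_eq_of_integral (hy.tower_top (A := R))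
  have hv : aeval v (minpoly k (algebraMap R M v)) = 0 := by
    apply FaithfulSMul.algebraMap_injective R M
    rw [← aeval_algebraMap_apply, minpoly.aeval, map_zero]
  refine ⟨ρ v, (minpoly.eq_of_irreducible_of_monic (minpoly.irreducible hy) ?_
    (minpoly.monic hy)).symm⟩
  rw [aeval_algHom_apply, hv, map_zero]

section PowerSeries

theorem exists_sq_eq_of_constantCoeff_eq_sq {R : Type*} [CommRing R] {u : R⟦X⟧} {b : R}
    (hb : IsUnit (2 * b)) (hu : PowerSeries.constantCoeff u = b ^ 2) :
    ∃ v : R⟦X⟧, PowerSeries.constantCoeff v = b ∧ v ^ 2 = u := by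
  have hder : (X ^ 2 - C u).derivative.eval (PowerSeries.C b) = PowerSeries.C (2 * b) := by
    simp [one_add_one_eq_two, map_ofNat PowerSeries.C 2]
  obtain ⟨v, hv, hvb⟩ := HenselianRing.is_henselian (I := Ideal.span {(PowerSeries.X : R⟦X⟧)})
    (X ^ 2 - C u) (monic_X_pow_sub_C u two_ne_zero) (PowerSeries.C b)
    (by simp [Ideal.mem_span_singleton, PowerSeries.X_dvd_iff, hu])
    (hder ▸ (hb.map PowerSeries.C).map _)
  rw [Ideal.mem_span_singleton, PowerSeries.X_dvd_iff] at hvb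
  exact ⟨v, by simpa [sub_eq_zero] using hvb, by simpa [sub_eq_zero] using hv⟩

variable {L M : Type*} [Field L] [Field M] [Algebra L⟦X⟧ M] [IsFractionRing L⟦X⟧ M]

theorem algebraMap_powerSeries_X_ne_zero : algebraMap L⟦X⟧ M PowerSeries.X ≠ 0 :=
  (map_ne_zero_iff _ (FaithfulSMul.algebraMap_injective _ _)).2 PowerSeries.X_ne_zero

theorem transcendental_inv_X_pow {k : Type*} [Field k] [Algebra k L] [Algebra k M]
    [IsScalarTower k L⟦X⟧ M] {n : ℕ} (hn : n ≠ 0) :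
    Transcendental k (algebraMap L⟦X⟧ M PowerSeries.X ^ n)⁻¹ := by
  intro halg
  obtain ⟨v, hv⟩ := IsIntegrallyClosed.algebraMap_eq_of_integral
    (halg.isIntegral.tower_top (A := L⟦X⟧))
  have hvX : v * PowerSeries.X ^ n = 1 := by
    apply FaithfulSMul.algebraMap_injective L⟦X⟧ M
    rw [map_mul, hv, map_pow, map_one,
      inv_mul_cancel₀ (pow_ne_zero n algebraMap_powerSeries_X_ne_zero)]
  simpa [hn] using congrArg PowerSeries.constantCoeff hvX

theorem exists_sq_add_eq_div_X_pow {R : Type*} [CommRing R] [Algebra R L] [Algebra R M]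
    [IsScalarTower R L⟦X⟧ M] (h2 : (2 : L) ≠ 0)
    (hL : ∀ a ∈ twoPowRootsOfUnity L, IsSquare a) (c : R) (n : ℕ) {u : L⟦X⟧}
    (hu : PowerSeries.constantCoeff u ∈ twoPowRootsOfUnity L) :
    ∃ v : L⟦X⟧, PowerSeries.constantCoeff v ∈ twoPowRootsOfUnity L ∧
      (algebraMap L⟦X⟧ M v / algebraMap L⟦X⟧ M PowerSeries.X ^ 2 ^ n) ^ 2 + algebraMap R M c =
        algebraMap L⟦X⟧ M u / algebraMap L⟦X⟧ M PowerSeries.X ^ 2 ^ (n + 1) := by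
  obtain ⟨b, hb⟩ := (isSquare_iff_exists_sq _).1 (hL _ hu)
  have hbμ : b ∈ twoPowRootsOfUnity L := sq_mem_twoPowRootsOfUnity_iff.1 (hb ▸ hu)
  obtain ⟨v, hvb, hv⟩ := exists_sq_eq_of_constantCoeff_eq_sq
    (u := u - algebraMap R L⟦X⟧ c * PowerSeries.X ^ 2 ^ (n + 1))
    (h2.isUnit.mul (isUnit_of_mem_twoPowRootsOfUnity hbμ)) (by simp [hb])
  refine ⟨v, hvb ▸ hbμ, ?_⟩
  have hX : algebraMap L⟦X⟧ M PowerSeries.X ^ 2 ^ (n + 1) ≠ 0 :=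
    pow_ne_zero _ algebraMap_powerSeries_X_ne_zero
  rw [div_pow, ← pow_mul, ← pow_succ, ← map_pow, hv, map_sub, map_mul, map_pow,
    ← IsScalarTower.algebraMap_apply, sub_div, mul_div_cancel_right₀ _ hX, sub_add_cancel]

end PowerSeries

section BackwardOrbit

variable {R : Type*} [CommRing R] {c : R} {S : Submonoid R} {T : Set R}

theorem forall_exists_sub_sq_eq_pow_map (hT : ∀ z ∈ T, ∃ y ∈ T, -y ∈ T ∧ y ^ 2 + c = z)
    {a : R} {n : ℕ} (ha : ∀ z ∈ T, ∃ w ∈ S, (z - a) ^ 2 = w ^ n) :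
    ∀ z ∈ T, ∃ w ∈ S, (z - (a ^ 2 + c)) ^ 2 = w ^ n := by
  intro z hz
  obtain ⟨y, hy, hy', rfl⟩ := hT z hz
  obtain ⟨w, hw, h⟩ := ha y hy
  obtain ⟨w', hw', h'⟩ := ha (-y) hy'
  refine ⟨w * w', S.mul_mem hw hw', ?_⟩
  rw [mul_pow, ← h, ← h']
  ring

theorem forall_exists_sq_eq_pow_of_periodic (hT : ∀ z ∈ T, ∃ y ∈ T, -y ∈ T ∧ y ^ 2 + c = z)
    (hTS : T ⊆ S) (h0 : 0 ∈ Function.periodicPts fun z : R ↦ z ^ 2 + c) (m : ℕ) :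
    ∀ z ∈ T, ∃ w ∈ S, z ^ 2 = w ^ 2 ^ (m + 1) := by
  induction m with
  | zero => exact fun z hz ↦ ⟨z, hTS hz, by simp⟩
  | succ m ih =>
    have hsub_c : ∀ z ∈ T, ∃ w ∈ S, (z - c) ^ 2 = w ^ 2 ^ (m + 2) := by
      intro z hz
      obtain ⟨y, hy, -, rfl⟩ := hT z hz
      obtain ⟨w, hw, h⟩ := ih y hy
      exact ⟨w, hw, by rw [add_sub_cancel_right, h, ← pow_mul, ← pow_succ]⟩
    have horbit (j : ℕ) : ∀ z ∈ T, ∃ w ∈ S,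
        (z - (fun z ↦ z ^ 2 + c)^[j + 1] 0) ^ 2 = w ^ 2 ^ (m + 2) := by
      induction j with
      | zero => simpa using hsub_c
      | succ j ihj =>
        rw [Function.iterate_succ_apply']
        exact forall_exists_sub_sq_eq_pow_map hT ihj
    obtain ⟨r, hr, hper⟩ := h0
    simpa [Nat.sub_add_cancel hr, hper.eq] using horbit (r - 1)

end BackwardOrbit

section Arboreal

variable {k : Type*} [Field k]

/-- The polynomial `f^n(X) - t` over `k(t)`, where `f^n` is the `n`-th iterate of `f`. -/
noncomputable def iterateSubX (f : k[X]) (n : ℕ) : (RatFunc k)[X] :=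
  (f.comp^[n] X).map (algebraMap k (RatFunc k)) - C RatFunc.X

variable (Ω : Type*) [Field Ω] [Algebra (RatFunc k) Ω]

/-- The splitting field `K_n` of `f^n(X) - t` inside the extension `Ω` of `k(t)`. -/
noncomputable def preimageField (f : k[X]) (n : ℕ) : IntermediateField (RatFunc k) Ω :=
  IntermediateField.adjoin (RatFunc k) ((iterateSubX f n).rootSet Ω)

/-- The compositum `K_∞` of the fields `K_n` with `n ≥ 1`. -/
noncomputable def arborealField (f : k[X]) : IntermediateField (RatFunc k) Ω :=
  ⨆ n, preimageField Ω f (n + 1)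

/-- The set of all iterated preimages in `Ω` of `t` under `f`, including `t` itself. -/
def backwardOrbit [Algebra k Ω] (f : k[X]) : Set Ω :=
  {y | ∃ n : ℕ, (fun z ↦ aeval z f)^[n] y = algebraMap (RatFunc k) Ω RatFunc.X}

variable {Ω}

theorem normal_arborealField [IsAlgClosed Ω] (f : k[X]) :
    Normal (RatFunc k) (arborealField Ω f) :=
  normal_iSup_adjoin_rootSet _

variable [Algebra k Ω] [IsScalarTower k (RatFunc k) Ω] {f : k[X]}

theorem mem_rootSet_iterateSubX (hf : 0 < f.natDegree) {n : ℕ} {y : Ω} :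
    y ∈ (iterateSubX f n).rootSet Ω ↔
      (fun z ↦ aeval z f)^[n] y = algebraMap (RatFunc k) Ω RatFunc.X := by
  have hne : iterateSubX f n ≠ 0 := by
    apply ne_zero_of_natDegree_gt (n := 0)
    rw [iterateSubX, natDegree_sub_C, natDegree_map, natDegree_iterate_comp, natDegree_X, mul_one]
    exact pow_pos hf n
  rw [mem_rootSet_of_ne hne, iterateSubX, map_sub, aeval_map_algebraMap, aeval_C, sub_eq_zero,
    aeval_def, iterate_comp_eval₂, eval₂_X]
  rfl

theorem preimageField_mono [IsAlgClosed Ω] (hf : 0 < f.natDegree) :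
    Monotone (preimageField Ω f) := by
  refine monotone_nat_of_le_succ fun n ↦ IntermediateField.adjoin_le_iff.2 fun y hy ↦ ?_
  obtain ⟨z, rfl⟩ : ∃ z, aeval z f = y := by
    simpa [eval_map_algebraMap, Function.Surjective] using
      IsAlgClosed.eval_surjective (p := f.map (algebraMap k Ω)) (by simpa using hf.ne') y
  have hz : z ∈ preimageField Ω f (n + 1) := IntermediateField.subset_adjoin _ _ <| by
    rwa [mem_rootSet_iterateSubX hf] at hy ⊢
  exact IntermediateField.aeval_coe _ ⟨z, hz⟩ f ▸ Subtype.property _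

theorem mem_arborealField_iff [IsAlgClosed Ω] (hf : 0 < f.natDegree) {x : Ω} :
    x ∈ arborealField Ω f ↔ ∃ n, x ∈ preimageField Ω f n := by
  have hmono := preimageField_mono (Ω := Ω) hf
  rw [arborealField, hmono.iSup_nat_add, ← SetLike.mem_coe,
    IntermediateField.coe_iSup_of_directed hmono.directed_le, Set.mem_iUnion]
  rfl

theorem backwardOrbit_subset_arborealField [IsAlgClosed Ω] (hf : 0 < f.natDegree) :
    backwardOrbit Ω f ⊆ arborealField Ω f := fun _ ⟨n, hn⟩ ↦ (mem_arborealField_iff hf).2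
  ⟨n, IntermediateField.subset_adjoin _ _ ((mem_rootSet_iterateSubX hf).2 hn)⟩

end Arboreal

section Quadratic

variable {k : Type*} [Field k]

theorem splits_map_iterate_sub_C {R M : Type*} [CommRing R] [Field M] [Algebra R M]
    {c : R} {s : ℕ → Set M}
    (hs : ∀ n, ∀ z ∈ s (n + 1), ∃ w ∈ s n, -w ∈ s n ∧ w ^ 2 + algebraMap R M c = z) (n : ℕ) :
    ∀ z ∈ s n, (((X ^ 2 + C c).comp^[n] X).map (algebraMap R M) - C z).Splits := by
  induction n with
  | zero => simp
  | succ n ih =>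
    intro z hz
    obtain ⟨w, hw, hw', rfl⟩ := hs n z hz
    convert (ih w hw).mul (ih (-w) hw') using 1
    rw [Function.iterate_succ_apply']
    simp only [add_comp, pow_comp, X_comp, C_comp, Polynomial.map_add, Polynomial.map_pow, map_C,
      C_add, C_pow, C_neg]
    ring

theorem exists_algHom_splits_iterateSubX {L M : Type*} [Field L] [Algebra k L] [Field M]
    [Algebra L⟦X⟧ M] [IsFractionRing L⟦X⟧ M] [Algebra k M] [IsScalarTower k L⟦X⟧ M]
    (h2 : (2 : L) ≠ 0) (hL : ∀ a ∈ twoPowRootsOfUnity L, IsSquare a) (c : k) (n : ℕ) :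
    ∃ φ : RatFunc k →ₐ[k] M, ((iterateSubX (X ^ 2 + C c) n).map (φ : RatFunc k →+* M)).Splits := by
  set ϖ : M := algebraMap L⟦X⟧ M PowerSeries.X
  obtain ⟨φ, hφ⟩ : ∃ φ : RatFunc k →ₐ[k] M, φ RatFunc.X = (ϖ ^ 2 ^ n)⁻¹ :=
    have htr : Transcendental k (ϖ ^ 2 ^ n)⁻¹ := transcendental_inv_X_pow (by positivity)
    ⟨(IntermediateField.val _).comp (RatFunc.algEquivOfTranscendental _ htr).toAlgHom, by simp⟩
  let s (m : ℕ) : Set M :=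
    {z | ∃ u : L⟦X⟧, PowerSeries.constantCoeff u ∈ twoPowRootsOfUnity L ∧
      algebraMap L⟦X⟧ M u / ϖ ^ 2 ^ m = z}
  have hs : ∀ m, ∀ z ∈ s (m + 1), ∃ w ∈ s m, -w ∈ s m ∧ w ^ 2 + algebraMap k M c = z := by
    rintro m _ ⟨u, hu, rfl⟩
    obtain ⟨v, hv, hvu⟩ := exists_sq_add_eq_div_X_pow (M := M) h2 hL c m hu
    exact ⟨_, ⟨v, hv, rfl⟩, ⟨-v, by simpa using neg_mem_twoPowRootsOfUnity hv, by
      rw [map_neg, neg_div]⟩, hvu⟩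
  have hsn : (ϖ ^ 2 ^ n)⁻¹ ∈ s n := ⟨1, by simpa using one_mem_twoPowRootsOfUnity, by simp⟩
  refine ⟨φ, ?_⟩
  rw [iterateSubX, Polynomial.map_sub, Polynomial.map_map, map_C, RingHom.coe_coe, hφ,
    φ.comp_algebraMap]
  exact splits_map_iterate_sub_C hs n _ hsn

variable {Ω : Type*} [Field Ω] [Algebra k Ω] [Algebra (RatFunc k) Ω]

theorem exists_neg_mem_backwardOrbit_sq_add_eq [IsAlgClosed Ω] {c : k} :
    ∀ z ∈ backwardOrbit Ω (X ^ 2 + C c), ∃ y ∈ backwardOrbit Ω (X ^ 2 + C c),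
      -y ∈ backwardOrbit Ω (X ^ 2 + C c) ∧ y ^ 2 + algebraMap k Ω c = z := by
  rintro z ⟨n, hn⟩
  obtain ⟨y, hy⟩ := IsAlgClosed.exists_pow_nat_eq (z - algebraMap k Ω c) two_pos
  have hyz : y ^ 2 + algebraMap k Ω c = z := by rw [hy, sub_add_cancel]
  exact ⟨y, ⟨n + 1, by simpa [hyz] using hn⟩, ⟨n + 1, by simpa [hyz] using hn⟩, hyz⟩

variable [IsScalarTower k (RatFunc k) Ω]

theorem exists_minpoly_eq_of_mem_preimageField {L : Type*} [Field L] [Algebra k L]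
    (h2 : (2 : L) ≠ 0) (hL : ∀ a ∈ twoPowRootsOfUnity L, IsSquare a) {c : k} {n : ℕ} {x : Ω}
    (hx : x ∈ preimageField Ω (X ^ 2 + C c) n) (hxk : IsIntegral k x) :
    ∃ a : L, minpoly k a = minpoly k x := by
  let ρ : L⟦X⟧ →ₐ[k] L := { PowerSeries.constantCoeff with
    commutes' := fun a ↦ by simp [PowerSeries.algebraMap_apply] }
  obtain ⟨φ, hφ⟩ := exists_algHom_splits_iterateSubX (M := FractionRing L⟦X⟧) h2 hL c n
  obtain ⟨ψ⟩ := nonempty_algHom_adjoin_rootSet_of_splits (Ω := Ω) φ hφ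
  let y : (preimageField Ω (X ^ 2 + C c) n).restrictScalars k := ⟨x, hx⟩
  have hψy : minpoly k (ψ y) = minpoly k x :=
    (minpoly.algHom_eq ψ ψ.injective y).trans (IntermediateField.minpoly_eq y)
  rw [← hψy]
  exact exists_minpoly_eq_of_isIntegral_fractionRing ρ
    ((IntermediateField.isIntegral_iff.2 hxk).map ψ)

variable [IsAlgClosed Ω]

theorem mem_adjoin_of_mem_arborealField (h2 : (2 : k) ≠ 0) {c : k} {x : Ω}
    (hx : x ∈ arborealField Ω (X ^ 2 + C c)) (hxk : IsIntegral k x) :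
    x ∈ IntermediateField.adjoin k (twoPowRootsOfUnity Ω) := by
  have := normal_adjoin_twoPowRootsOfUnity (K := k) (Ω := Ω)
  obtain ⟨n, hn⟩ := (mem_arborealField_iff (by simp)).1 hx
  have h2L : (2 : IntermediateField.adjoin k (twoPowRootsOfUnity Ω)) ≠ 0 := by
    rwa [← map_ofNat (algebraMap k _) 2, _root_.map_ne_zero]
  obtain ⟨a, ha⟩ := exists_minpoly_eq_of_mem_preimageField h2L
    (fun _ ↦ isSquare_of_mem_twoPowRootsOfUnity_adjoin) hn hxk
  exact mem_of_normal_of_minpoly_eq ha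

theorem exists_mem_arborealField_pow_eq_X_sub_C {c : k}
    (h0 : 0 ∈ Function.periodicPts fun z : k ↦ z ^ 2 + c) (m : ℕ) :
    ∃ w ∈ arborealField Ω (X ^ 2 + C c),
      w ^ 2 ^ m = algebraMap (RatFunc k) Ω (algebraMap k[X] (RatFunc k) (X - C c)) := by
  have h0Ω : 0 ∈ Function.periodicPts fun z : Ω ↦ z ^ 2 + algebraMap k Ω c := by
    obtain ⟨r, hr, hper⟩ := h0
    exact ⟨r, hr, by simpa using hper.map (g := algebraMap k Ω) (fun z ↦ by simp)⟩
  have ht : algebraMap (RatFunc k) Ω RatFunc.X ∈ backwardOrbit Ω (X ^ 2 + C c) := ⟨0, rfl⟩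
  obtain ⟨y, hy, -, hyt⟩ := exists_neg_mem_backwardOrbit_sq_add_eq _ ht
  obtain ⟨w, hw, hyw⟩ := forall_exists_sq_eq_pow_of_periodic
    (S := (arborealField Ω (X ^ 2 + C c)).toSubalgebra.toSubmonoid)
    exists_neg_mem_backwardOrbit_sq_add_eq
    (backwardOrbit_subset_arborealField (by simp)) h0Ω m y hy
  refine ⟨w ^ 2, pow_mem hw 2, ?_⟩
  rw [← pow_mul, ← pow_succ', ← hyw, eq_sub_of_add_eq hyt]
  simp [← IsScalarTower.algebraMap_apply, ← RatFunc.algebraMap_eq_C]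

theorem twoPowRootsOfUnity_subset_arborealField {c : k}
    (h0 : 0 ∈ Function.periodicPts fun z : k ↦ z ^ 2 + c) :
    twoPowRootsOfUnity Ω ⊆ arborealField Ω (X ^ 2 + C c) := by
  rintro x ⟨m, hx⟩
  have := normal_arborealField (Ω := Ω) (X ^ 2 + C c)
  have hprime := prime_X_sub_C c
  obtain ⟨w, hw, hwt⟩ := exists_mem_arborealField_pow_eq_X_sub_C (Ω := Ω) h0 m
  refine mem_of_pow_eq_one_of_irreducible
    (irreducible_X_pow_sub_C_of_prime (RatFunc k) hprime (by positivity)) hw hwt ?_ hx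
  have ht : algebraMap (RatFunc k) Ω (algebraMap k[X] (RatFunc k) (X - C c)) ≠ 0 := by
    simpa only [Ne, map_eq_zero, FaithfulSMul.algebraMap_eq_zero_iff] using hprime.ne_zero
  exact ne_zero_pow (by positivity) (hwt ▸ ht)

theorem constant_field_extension_general {c : k} (h2 : (2 : k) ≠ 0)
    (h0 : 0 ∈ Function.periodicPts fun z : k ↦ z ^ 2 + c) :
    (arborealField Ω (X ^ 2 + C c) : Set Ω) ∩ {x | IsAlgebraic k x} =
      IntermediateField.adjoin k (twoPowRootsOfUnity Ω) := by
  have hle : IntermediateField.adjoin k (twoPowRootsOfUnity Ω) ≤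
      (arborealField Ω (X ^ 2 + C c)).restrictScalars k :=
    IntermediateField.adjoin_le_iff.2 (twoPowRootsOfUnity_subset_arborealField h0)
  have hn := normal_adjoin_twoPowRootsOfUnity (K := k) (Ω := Ω)
  refine Set.Subset.antisymm (fun x hx ↦ ?_) fun x hx ↦ ⟨hle hx, ?_⟩
  · exact mem_adjoin_of_mem_arborealField h2 hx.1 hx.2.isIntegral
  · exact (hn.isIntegral ⟨x, hx⟩).isAlgebraic.algebraMap (A := Ω)

end Quadratic

/-- Let `k` be a field of characteristic `≠ 2` and `f(z) = z² + c ∈ k[z]`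
with `f^r(0) = 0` for some `r ≥ 1`. Let `K = k(t)` be the rational function field, `Ω` an
algebraic closure of `k(t)`, `F n` the polynomial iterate `f^n` over `k`, `K_n` the
splitting field of `f^n(X) − t` over `k(t)` inside `Ω` (the field generated by the roots),
and `K_∞ = ⋃_{n≥1} K_n`. Then `K_∞ ∩ k̄ = k(μ_{2^∞})`: the intersection of `K_∞` with the
algebraic closure of `k` inside `Ω` is the field obtained from `k` by adjoining all roots
of unity of `2`-power order. -/
theorem constant_field_extension (k : Type*) [Field k] (hchar : ringChar k ≠ 2) (c : k)
    (r : ℕ) (hr : 1 ≤ r)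
    (hper : (fun z : k => z ^ 2 + c)^[r] 0 = 0)
    (F : ℕ → Polynomial k)
    (hF0 : F 0 = X)
    (hFs : ∀ n : ℕ, F (n+1) = (X ^ 2 + C c).comp (F n)) :
    ((⨆ n : ℕ, IntermediateField.adjoin (RatFunc k)
        ((((F (n+1)).map (algebraMap k (RatFunc k)) - C RatFunc.X)).rootSet
          (AlgebraicClosure (RatFunc k))) :
        IntermediateField (RatFunc k) (AlgebraicClosure (RatFunc k))) : Set (AlgebraicClosure (RatFunc k)))
      ∩ {x : AlgebraicClosure (RatFunc k) | IsAlgebraic k x}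
    = ((IntermediateField.adjoin k
        {x : AlgebraicClosure (RatFunc k) | ∃ n : ℕ, x ^ (2^n) = 1} :
        IntermediateField k (AlgebraicClosure (RatFunc k))) : Set (AlgebraicClosure (RatFunc k))) := by
  obtain rfl : F = fun n ↦ (X ^ 2 + C c).comp^[n] X := by
    funext n
    induction n with
    | zero => exact hF0
    | succ n ih => rw [hFs, ih, Function.iterate_succ_apply']
  exact constant_field_extension_general (Ring.two_ne_zero hchar)
    (Function.mk_mem_periodicPts hr hper)
end

section
/- Let k be any field with a fixed algebraic closure k̄. Then the following are equivalent: (i) k̄ contains a primitive 8th root of unity ζ_8 and [k(ζ_8) : k] = 4; (ii) k has characteristic 0 and k ∩ ℚ(μ_{2^∞}) = ℚ, where ℚ(μ_{2^∞}) denotes the subfield of k̄ generated over the prime field ℚ by all roots of unity of 2-power order, and the intersection is taken inside k̄. -/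
/-!
If `X ^ 4 - a` is irreducible over `K` and `y ^ 2 = a` with `K(y)/K` quadratic, then neither `y` nor
`-y` is a square in `K(y)`. Taking norms down to `K` shows that this property (neither the element
nor its negative is a square) is inherited by square roots, so `X ^ (2 ^ n) - a` is irreducible for
every `n`. For `a = -1` this says that once `ζ_8` has degree `4` over `k`, every `ζ_{2 ^ n}` has the
same minimal polynomial over `k` as over `ℚ`, which forces `k ∩ ℚ(ζ_{2 ^ n}) = ℚ`. In characteristic
`p` the degree of `ζ_8` is never `4`, since `(ℤ/8)ˣ` is not cyclic.

Conversely, the coefficients of the minimal polynomial of `ζ_8` over `k` lie both in `k` and in the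
field generated by its roots, hence in `k ∩ ℚ(μ_{2^∞}) = ℚ`, so this polynomial is the one over
`ℚ`, of degree `4`.
-/

open Polynomial IntermediateField

universe u

section TwoPowerBinomial

variable {K : Type u} [Field K] {a : K}

theorem X_pow_two_pow_succ_sub_C_irreducible (n : ℕ) (ha : ¬ IsSquare a)
    (h : ∀ (E : Type u) [Field E] [Algebra K E] (y : E), Module.finrank K E = 2 →
      y ^ 2 = algebraMap K E a → Irreducible (X ^ 2 ^ n - C y)) :
    Irreducible (X ^ 2 ^ (n + 1) - C a) := by
  have hirr : Irreducible (X ^ 2 - C a) :=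
    X_pow_sub_C_irreducible_of_prime Nat.prime_two fun b hb => ha (hb ▸ IsSquare.sq b)
  rw [pow_succ]
  refine X_pow_mul_sub_C_irreducible hirr fun E _ _ x hx => h K⟮x⟯ _ ?_ ?_
  · have hint : IsIntegral K x := by
      by_contra hx'
      exact hirr.ne_zero (hx ▸ minpoly.eq_zero hx')
    rw [adjoin.finrank hint, hx, natDegree_X_pow_sub_C]
  · have hroot := minpoly.aeval K (AdjoinSimple.gen K x)
    rw [minpoly_gen, hx] at hroot
    simpa [sub_eq_zero] using hroot

theorem not_isSquare_of_sq_eq_algebraMap {E : Type*} [Field E] [Algebra K E]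
    (hE : Module.finrank K E = 2) (ha : ¬ IsSquare a) (hna : ¬ IsSquare (-a)) {y : E}
    (hy : y ^ 2 = algebraMap K E a) : ¬ IsSquare y := by
  rintro ⟨b, rfl⟩
  have hnorm : (Algebra.norm K b ^ 2) ^ 2 = a ^ 2 :=
    calc (Algebra.norm K b ^ 2) ^ 2
      _ = Algebra.norm K ((b * b) ^ 2) := by simp only [map_mul, sq]
      _ = a ^ 2 := by rw [hy, Algebra.norm_algebraMap, hE]
  rcases sq_eq_sq_iff_eq_or_eq_neg.mp hnorm with h | h
  · exact ha (h ▸ IsSquare.sq _)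
  · exact hna (h ▸ IsSquare.sq _)

theorem X_pow_two_pow_sub_C_irreducible (n : ℕ) {K : Type u} [Field K] {a : K}
    (ha : ¬ IsSquare a) (hna : ¬ IsSquare (-a)) : Irreducible (X ^ 2 ^ n - C a) := by
  induction n generalizing K with
  | zero => simpa using irreducible_X_sub_C a
  | succ n ih =>
    refine X_pow_two_pow_succ_sub_C_irreducible n ha fun E _ _ y hE hy => ih ?_ ?_
    · exact not_isSquare_of_sq_eq_algebraMap hE ha hna hy
    · exact not_isSquare_of_sq_eq_algebraMap hE ha hna (by rwa [neg_sq])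

theorem not_isSquare_of_irreducible_X_pow_four_sub_C {E : Type*} [Field E] [Algebra K E]
    (hE : Module.finrank K E = 2) (ha : Irreducible (X ^ 4 - C a)) {y : E}
    (hy : y ^ 2 = algebraMap K E a) : ¬ IsSquare y := by
  rintro ⟨b, rfl⟩
  have hb : aeval b (X ^ 4 - C a) = 0 := by
    simp only [map_sub, map_pow, aeval_X, aeval_C, ← hy]
    ring
  have hmin : X ^ 4 - C a = minpoly K b :=
    minpoly.eq_of_irreducible_of_monic ha hb (monic_X_pow_sub_C a four_ne_zero)
  have : FiniteDimensional K E := .of_finrank_eq_succ hE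
  have hdeg := minpoly.natDegree_le (A := K) b
  rw [← hmin, natDegree_X_pow_sub_C, hE] at hdeg
  omega

theorem X_pow_two_pow_sub_C_irreducible_of_X_pow_four (ha : Irreducible (X ^ 4 - C a)) (n : ℕ) :
    Irreducible (X ^ 2 ^ n - C a) := by
  cases n with
  | zero => simpa using irreducible_X_sub_C a
  | succ n =>
    have hsq : ¬ IsSquare a := by
      rintro ⟨b, rfl⟩
      exact pow_ne_of_irreducible_X_pow_sub_C ha (m := 2) (by norm_num) (by norm_num) b (sq b)
    refine X_pow_two_pow_succ_sub_C_irreducible n hsq fun E _ _ y hE hy =>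
      X_pow_two_pow_sub_C_irreducible n ?_ ?_
    · exact not_isSquare_of_irreducible_X_pow_four_sub_C hE ha hy
    · exact not_isSquare_of_irreducible_X_pow_four_sub_C hE ha (by rwa [neg_sq])

end TwoPowerBinomial

section Cyclotomic

theorem cyclotomic_two_pow_succ (n : ℕ) (R : Type*) [CommRing R] :
    cyclotomic (2 ^ (n + 1)) R = X ^ 2 ^ n - C (-1) := by
  rw [cyclotomic_prime_pow_eq_geom_sum Nat.prime_two]
  simp [Finset.sum_range_succ, add_comm]

variable {K : Type*} [Field K]

theorem irreducible_cyclotomic_two_pow_of_eight (h : Irreducible (cyclotomic 8 K)) (n : ℕ) :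
    Irreducible (cyclotomic (2 ^ n) K) := by
  cases n with
  | zero => simpa using irreducible_X_sub_C (1 : K)
  | succ n =>
    rw [cyclotomic_two_pow_succ]
    exact X_pow_two_pow_sub_C_irreducible_of_X_pow_four (cyclotomic_two_pow_succ 2 K ▸ h) n

theorem isCyclic_units_of_irreducible_cyclotomic_zmod {p n : ℕ} [Fact p.Prime] [NeZero n]
    (hpn : p.Coprime n) (h : Irreducible (cyclotomic n (ZMod p))) : IsCyclic (ZMod n)ˣ := by
  have horder := natDegree_of_dvd_cyclotomic_of_irreducible (f := 1) (by simp) hpn dvd_rfl h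
  refine isCyclic_of_orderOf_eq_card (ZMod.unitOfCoprime (p ^ 1) (hpn.pow_left 1)) ?_
  rw [← horder, natDegree_cyclotomic, Nat.card_eq_fintype_card, ZMod.card_units_eq_totient]

theorem charZero_of_irreducible_cyclotomic {n : ℕ} [NeZero (n : K)]
    (hn : ¬ IsCyclic (ZMod n)ˣ) (h : Irreducible (cyclotomic n K)) : CharZero K := by
  obtain ⟨p, hp⟩ := CharP.exists K
  rcases CharP.char_is_prime_or_zero K p with hprime | rfl
  · have : Fact p.Prime := ⟨hprime⟩
    have : NeZero n := .of_neZero_natCast K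
    have hpn : p.Coprime n := hprime.coprime_iff_not_dvd.mpr fun hdvd =>
      NeZero.ne (n : K) ((CharP.cast_eq_zero_iff K p n).mpr hdvd)
    have hirr : Irreducible (cyclotomic n (ZMod p)) :=
      (cyclotomic.monic n _).irreducible_of_irreducible_map (ZMod.castHom dvd_rfl K) _
        (by rwa [map_cyclotomic])
    exact absurd (isCyclic_units_of_irreducible_cyclotomic_zmod hpn hirr) hn
  · exact CharP.charP_to_charZero K

variable {E : Type*} [Field E] [Algebra K E]

theorem finrank_adjoin_primitiveRoot_eq_totient_iff {n : ℕ} [NeZero n] {ζ : E}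
    (hζ : IsPrimitiveRoot ζ n) :
    Module.finrank K K⟮ζ⟯ = n.totient ↔ Irreducible (cyclotomic n K) := by
  have hint : IsIntegral K ζ := (hζ.isIntegral (NeZero.pos n)).tower_top
  have hroot : aeval ζ (cyclotomic n K) = 0 := by
    rw [aeval_def, ← eval_map, map_cyclotomic]
    exact hζ.isRoot_cyclotomic (NeZero.pos n)
  rw [adjoin.finrank hint]
  constructor
  · intro hdeg
    have hmin : cyclotomic n K = minpoly K ζ :=
      eq_of_monic_of_dvd_of_natDegree_le (minpoly.monic hint) (cyclotomic.monic n K)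
        (minpoly.dvd K ζ hroot) (by rw [natDegree_cyclotomic, hdeg])
    exact hmin ▸ minpoly.irreducible hint
  · intro hirr
    rw [← minpoly.eq_of_irreducible_of_monic hirr hroot (cyclotomic.monic n K),
      natDegree_cyclotomic]

theorem exists_forall_mem_adjoin_primitiveRoot {p : ℕ} [NeZero p] {x : E}
    (hx : x ∈ adjoin K {y : E | ∃ n : ℕ, y ^ p ^ n = 1}) :
    ∃ n : ℕ, ∀ ζ : E, IsPrimitiveRoot ζ (p ^ n) → x ∈ K⟮ζ⟯ := by
  obtain ⟨T, hT, hxT⟩ := exists_finset_of_mem_adjoin hx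
  choose! e he using hT
  refine ⟨T.sup e, fun ζ hζ => adjoin_le_iff.mpr (fun y hy => ?_) hxT⟩
  have hy' : y ^ p ^ T.sup e = 1 := by
    obtain ⟨m, hm⟩ := pow_dvd_pow p (Finset.le_sup (f := e) hy)
    rw [hm, pow_mul, he hy, one_pow]
  obtain ⟨i, -, rfl⟩ := hζ.eq_pow_of_pow_eq_one hy'
  exact pow_mem (mem_adjoin_simple_self K ζ) i

end Cyclotomic

section Descent

theorem mem_lifts_of_roots_mem {R K E : Type*} [Semiring R] [Field K] [Field E] [Algebra K E]
    {f : R →+* K} {p : K[X]} (hp : p.Monic) (hsplits : (p.map (algebraMap K E)).Splits)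
    {S : Subfield E} (hroots : ∀ y : E, aeval y p = 0 → y ∈ S)
    (hS : ∀ c : K, algebraMap K E c ∈ S → c ∈ f.rangeS) : p ∈ lifts f := by
  have hlift : p.map (algebraMap K E) ∈ lifts S.subtype := by
    rw [hsplits.eq_prod_roots_of_monic (hp.map _)]
    refine multiset_prod_mem _ fun q hq => ?_
    obtain ⟨y, hy, rfl⟩ := Multiset.mem_map.mp hq
    have hyS : y ∈ S := hroots y (mem_aroots'.mp hy).2
    exact (mem_lifts _).mpr ⟨X - C ⟨y, hyS⟩, by simp⟩
  rw [lifts_iff_coeff_lifts] at hlift ⊢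
  intro i
  obtain ⟨s, hs⟩ := hlift i
  exact hS _ (by rw [← coeff_map, ← hs]; exact s.2)

variable {F K E : Type*} [Field F] [Field K] [Field E] [Algebra F K] [Algebra K E] [Algebra F E]
  [IsScalarTower F K E] {x : E}

theorem minpoly_eq_map_of_mem_lifts (hx : IsIntegral K x)
    (h : minpoly K x ∈ lifts (algebraMap F K)) :
    minpoly K x = (minpoly F x).map (algebraMap F K) := by
  obtain ⟨q, hq, hdeg, hmonic⟩ := lifts_and_degree_eq_and_monic h (minpoly.monic hx)
  have hroot : aeval x q = 0 := by
    rw [← aeval_map_algebraMap K, hq, minpoly.aeval]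
  have hmin : q = minpoly F x := by
    refine minpoly.unique F x hmonic hroot fun r hr hrx => ?_
    rw [hdeg, ← degree_map r (algebraMap F K)]
    exact minpoly.min K x (hr.map _) (by rwa [aeval_map_algebraMap])
  rw [← hmin, hq]

theorem mem_range_algebraMap_of_mem_adjoin_simple (hx : IsIntegral F x)
    (hmin : minpoly K x = (minpoly F x).map (algebraMap F K)) {c : K}
    (hc : algebraMap K E c ∈ F⟮x⟯) : c ∈ (algebraMap F K).range := by
  obtain ⟨r, hr, hrc⟩ := (adjoin.powerBasis hx).exists_eq_aeval ⟨_, hc⟩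
  rw [adjoin.powerBasis_dim] at hr
  rw [adjoin.powerBasis_gen] at hrc
  have hrx : aeval x r = algebraMap K E c := by
    rw [← AdjoinSimple.algebraMap_gen F x, aeval_algebraMap_apply, ← hrc]
    rfl
  have hroot : aeval x (r.map (algebraMap F K) - C c) = 0 := by
    rw [map_sub, aeval_map_algebraMap, hrx, aeval_C, sub_self]
  have hdeg : (r.map (algebraMap F K) - C c).natDegree < (minpoly K x).natDegree := by
    rwa [natDegree_sub_C, natDegree_map, hmin, natDegree_map]
  have hconst : r.map (algebraMap F K) = C c :=
    sub_eq_zero.mp (eq_zero_of_dvd_of_natDegree_lt (minpoly.dvd K x hroot) hdeg)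
  exact ⟨r.coeff 0, by rw [← coeff_map, hconst, coeff_C_zero]⟩

end Descent

/-- The field `ℚ(μ_{2^∞})`: the subfield of `E` generated by all roots of unity of `2`-power order.
A subfield always contains the prime field, so `ℚ` is not listed among the generators. -/
def twoPowerRootsField (E : Type*) [Field E] : Subfield E :=
  Subfield.closure {x : E | ∃ n : ℕ, x ^ 2 ^ n = 1}

section Intersection

variable {k E : Type*} [Field k] [CharZero k] [Field E] [Algebra k E]

theorem range_inter_eq_range_ratCast_iff {S : Subfield E} :
    Set.range (algebraMap k E) ∩ S = Set.range (Rat.cast : ℚ → E) ↔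
      ∀ c : k, algebraMap k E c ∈ S → c ∈ (algebraMap ℚ k).range := by
  constructor
  · intro h c hc
    obtain ⟨q, hq⟩ : algebraMap k E c ∈ Set.range Rat.cast := h ▸ ⟨⟨c, rfl⟩, hc⟩
    exact ⟨q, (algebraMap k E).injective (by simpa using hq)⟩
  · intro h
    refine Set.Subset.antisymm ?_ ?_
    · rintro _ ⟨⟨c, rfl⟩, hc⟩
      obtain ⟨q, rfl⟩ := h c hc
      exact ⟨q, by simp⟩
    · rintro _ ⟨q, rfl⟩
      exact ⟨⟨q, by simp⟩, SubfieldClass.ratCast_mem S q⟩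

variable [IsAlgClosed E]

theorem mem_range_algebraMap_rat_of_mem_twoPowerRootsField
    (hirr : Irreducible (cyclotomic 8 k)) {c : k}
    (hc : algebraMap k E c ∈ twoPowerRootsField E) : c ∈ (algebraMap ℚ k).range := by
  have : CharZero E := charZero_of_injective_algebraMap (algebraMap k E).injective
  have hle : twoPowerRootsField E ≤ (adjoin ℚ {y : E | ∃ n : ℕ, y ^ 2 ^ n = 1}).toSubfield :=
    Subfield.closure_le.mpr (subset_adjoin ℚ _)
  obtain ⟨n, hn⟩ := exists_forall_mem_adjoin_primitiveRoot (hle hc)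
  obtain ⟨ζ, hζ⟩ := HasEnoughRootsOfUnity.exists_primitiveRoot E (2 ^ n)
  have hpos : 0 < 2 ^ n := Nat.two_pow_pos n
  have hmin : minpoly k ζ = (minpoly ℚ ζ).map (algebraMap ℚ k) := by
    rw [← cyclotomic_eq_minpoly_rat hζ hpos, map_cyclotomic,
      hζ.minpoly_eq_cyclotomic_of_irreducible (irreducible_cyclotomic_two_pow_of_eight hirr n)]
  exact mem_range_algebraMap_of_mem_adjoin_simple (hζ.isIntegral hpos).tower_top hmin (hn ζ hζ)

theorem irreducible_cyclotomic_of_inter_eq_rat {n : ℕ} [NeZero n] {S : Subfield E}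
    (hroots : ∀ y : E, y ^ n = 1 → y ∈ S)
    (hS : ∀ c : k, algebraMap k E c ∈ S → c ∈ (algebraMap ℚ k).range) :
    Irreducible (cyclotomic n k) := by
  have : CharZero E := charZero_of_injective_algebraMap (algebraMap k E).injective
  obtain ⟨ζ, hζ⟩ := HasEnoughRootsOfUnity.exists_primitiveRoot E n
  have hint : IsIntegral k ζ := (hζ.isIntegral (NeZero.pos n)).tower_top
  have hdvd : minpoly k ζ ∣ X ^ n - 1 := minpoly.dvd k ζ (by simp [hζ.pow_eq_one])
  have hlift : minpoly k ζ ∈ lifts (algebraMap ℚ k) := by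
    refine mem_lifts_of_roots_mem (minpoly.monic hint) (IsAlgClosed.splits _) (fun y hy => ?_) hS
    have hy' : aeval y (X ^ n - 1 : k[X]) = 0 := aeval_eq_zero_of_dvd_aeval_eq_zero hdvd hy
    exact hroots y (sub_eq_zero.mp (by simpa using hy'))
  have hmin : cyclotomic n k = minpoly k ζ := by
    rw [minpoly_eq_map_of_mem_lifts hint hlift, ← cyclotomic_eq_minpoly_rat hζ (NeZero.pos n),
      map_cyclotomic]
  exact hmin ▸ minpoly.irreducible hint

theorem irreducible_cyclotomic_eight_iff :
    Irreducible (cyclotomic 8 k) ↔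
      Set.range (algebraMap k E) ∩ twoPowerRootsField E = Set.range (Rat.cast : ℚ → E) := by
  rw [range_inter_eq_range_ratCast_iff]
  exact ⟨fun hirr _ => mem_range_algebraMap_rat_of_mem_twoPowerRootsField hirr,
    irreducible_cyclotomic_of_inter_eq_rat fun _ hy => Subfield.subset_closure ⟨3, hy⟩⟩

end Intersection

theorem zeta8_degree_iff_general (k E : Type*) [Field k] [Field E] [Algebra k E] [IsAlgClosed E] :
    (∃ ζ : E, IsPrimitiveRoot ζ 8 ∧ Module.finrank k k⟮ζ⟯ = 4) ↔
    (CharZero k ∧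
      Set.range (algebraMap k E) ∩ twoPowerRootsField E = Set.range (Rat.cast : ℚ → E)) := by
  have htotient : Nat.totient 8 = 4 := by decide
  constructor
  · rintro ⟨ζ, hζ, hdeg⟩
    have hirr : Irreducible (cyclotomic 8 k) :=
      (finrank_adjoin_primitiveRoot_eq_totient_iff hζ).mp (hdeg.trans htotient.symm)
    have : NeZero ((8 : ℕ) : E) := hζ.neZero'
    have : NeZero ((8 : ℕ) : k) := .nat_of_neZero (algebraMap k E)
    have hchar : CharZero k := charZero_of_irreducible_cyclotomic ZMod.not_isCyclic_units_eight hirr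
    exact ⟨hchar, irreducible_cyclotomic_eight_iff.mp hirr⟩
  · rintro ⟨hchar, hinter⟩
    have : CharZero E := charZero_of_injective_algebraMap (algebraMap k E).injective
    obtain ⟨ζ, hζ⟩ := HasEnoughRootsOfUnity.exists_primitiveRoot E 8
    have hirr : Irreducible (cyclotomic 8 k) := irreducible_cyclotomic_eight_iff.mpr hinter
    exact ⟨ζ, hζ, ((finrank_adjoin_primitiveRoot_eq_totient_iff hζ).mpr hirr).trans htotient⟩

/-- Let `k` be any field with a fixed algebraic closure `k̄`. Then the
following are equivalent: (i) `k̄` contains a primitive `8`-th root of unity `ζ_8` and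
`[k(ζ_8) : k] = 4`; (ii) `k` has characteristic `0` and `k ∩ ℚ(μ_{2^∞}) = ℚ`, where
`ℚ(μ_{2^∞})` is the subfield of `k̄` generated (over the prime field `ℚ`) by all roots of
unity of `2`-power order, and the intersection is taken inside `k̄` (identifying `k` with
its image and `ℚ` with the prime subfield `Set.range Rat.cast`). -/
theorem zeta8_degree_iff (k : Type*) [Field k] :
    (∃ ζ : AlgebraicClosure k, IsPrimitiveRoot ζ 8 ∧
      Module.finrank k (IntermediateField.adjoin k {ζ} :
        IntermediateField k (AlgebraicClosure k)) = 4) ↔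
    (CharZero k ∧
      Set.range (algebraMap k (AlgebraicClosure k)) ∩
        (Subfield.closure {x : AlgebraicClosure k | ∃ n : ℕ, x ^ (2^n) = 1} :
          Subfield (AlgebraicClosure k))
      = Set.range (Rat.cast : ℚ → AlgebraicClosure k)) :=
  zeta8_degree_iff_general k (AlgebraicClosure k)
end
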